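/- Let p ∈ ℝ[x₁,…,xₙ] be a real-zero polynomial with respect to e ∈ ℝⁿ and assume its rigidly convex set S_e(p) is compact. Assume further that for each boundary point a of S_e(p) and each irreducible factor p_i of p with p_i(a) = 0, the point a is a smooth point of p_i and p_i does not vanish identically on any full affine line through a. Then S_e(p) is a spectrahedral shadow. -/

import Mathlib

open MvPolynomial

/-- The univariate polynomial `t ↦ h(a + t·v)` obtained by restricting a multivariate
polynomial `h` to the line through `a` with direction `v`. -/
noncomputable def linePoly {n : ℕ} (h : MvPolynomial (Fin n) ℝ) (a v : Fin n → ℝ) :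
    Polynomial ℝ :=
  MvPolynomial.aeval (fun i => Polynomial.C (a i) + Polynomial.C (v i) * Polynomial.X) h

/-- A real univariate polynomial has only real roots. -/
def RealRooted (q : Polynomial ℝ) : Prop :=
  ∀ z : ℂ, Polynomial.aeval z q = 0 → z.im = 0

/-- A real univariate polynomial has only non-negative real roots. -/
def NonnegRealRooted (q : Polynomial ℝ) : Prop :=
  ∀ z : ℂ, Polynomial.aeval z q = 0 → z.im = 0 ∧ 0 ≤ z.re

/-- `h` is hyperbolic in direction `e`: `h(e) ≠ 0` and for all `a` the univariate
polynomial `t ↦ h(a - t·e)` has only real roots. -/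
def IsHyperbolic {n : ℕ} (h : MvPolynomial (Fin n) ℝ) (e : Fin n → ℝ) : Prop :=
  MvPolynomial.eval e h ≠ 0 ∧ ∀ a : Fin n → ℝ, RealRooted (linePoly h a (-e))

/-- The hyperbolicity cone `Λ_e(h)`. -/
def hypCone {n : ℕ} (h : MvPolynomial (Fin n) ℝ) (e : Fin n → ℝ) : Set (Fin n → ℝ) :=
  {a | NonnegRealRooted (linePoly h a (-e))}

/-- multiplicity (order of vanishing) of `h` at `a`: the smallest `m` such that the
degree-`m` homogeneous component of `h(x + a)` is non-zero. -/
noncomputable def multAt {n : ℕ} (h : MvPolynomial (Fin n) ℝ) (a : Fin n → ℝ) : ℕ :=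
  sInf {m | MvPolynomial.homogeneousComponent m
    (MvPolynomial.aeval (fun i => MvPolynomial.X i + MvPolynomial.C (a i)) h) ≠ 0}

/-- `p` is a real-zero polynomial with respect to `e`. -/
def IsRealZero {n : ℕ} (p : MvPolynomial (Fin n) ℝ) (e : Fin n → ℝ) : Prop :=
  MvPolynomial.eval e p ≠ 0 ∧ ∀ v : Fin n → ℝ, RealRooted (linePoly p e v)

/-- The rigidly convex set `S_e(p)` of a real-zero polynomial. -/
def rigidSet {n : ℕ} (p : MvPolynomial (Fin n) ℝ) (e : Fin n → ℝ) : Set (Fin n → ℝ) :=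
  {a | ∀ t : ℝ, 0 ≤ t → t < 1 → ¬ (linePoly p e (a - e)).IsRoot t}

/-- A polynomial is strictly quasi-concave at `a` if its Hessian at `a` is negative
definite on the orthogonal complement of its gradient at `a`. -/
def StrictQuasiConcaveAt {n : ℕ} (g : MvPolynomial (Fin n) ℝ) (a : Fin n → ℝ) : Prop :=
  ∀ v : Fin n → ℝ, v ≠ 0 →
    (∑ i, v i * MvPolynomial.eval a (MvPolynomial.pderiv i g)) = 0 →
    (∑ i, ∑ j, v i * v j *
      MvPolynomial.eval a (MvPolynomial.pderiv i (MvPolynomial.pderiv j g))) < 0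

/-- A spectrahedral shadow (cone version): a linear image of
`{a : a₁M₁ + ⋯ + aₘMₘ ⪰ 0}` for real symmetric matrices `Mᵢ`. -/
def IsSpectrahedralShadowCone {n : ℕ} (S : Set (Fin n → ℝ)) : Prop :=
  ∃ (m d : ℕ) (M : Fin m → Matrix (Fin d) (Fin d) ℝ)
    (L : (Fin m → ℝ) →ₗ[ℝ] (Fin n → ℝ)),
      (∀ i, (M i).IsSymm) ∧ S = L '' {a | (∑ i, a i • M i).PosSemidef}

/-- A spectrahedral shadow: a linear image of
`{b : M₀ + b₁M₁ + ⋯ + bₘMₘ ⪰ 0}` for real symmetric matrices `Mᵢ`. -/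
def IsSpectrahedralShadow {n : ℕ} (S : Set (Fin n → ℝ)) : Prop :=
  ∃ (m d : ℕ) (M₀ : Matrix (Fin d) (Fin d) ℝ) (M : Fin m → Matrix (Fin d) (Fin d) ℝ)
    (L : (Fin m → ℝ) →ₗ[ℝ] (Fin n → ℝ)),
      M₀.IsSymm ∧ (∀ i, (M i).IsSymm) ∧
      S = L '' {b | (M₀ + ∑ i, b i • M i).PosSemidef}

/-- A convex set is pointed if it contains no affine line. -/
def PointedSet {n : ℕ} (S : Set (Fin n → ℝ)) : Prop :=
  ¬ ∃ (a v : Fin n → ℝ), v ≠ 0 ∧ ∀ t : ℝ, a + t • v ∈ S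

/-- Directional derivative `∂_e h = Σᵢ eᵢ ∂h/∂xᵢ`. -/
noncomputable def dirDeriv {n : ℕ} (e : Fin n → ℝ) (h : MvPolynomial (Fin n) ℝ) :
    MvPolynomial (Fin n) ℝ :=
  ∑ i, e i • MvPolynomial.pderiv i h

/-!
Let `S` be the rigidly convex set of `p` and `e`. A compact convex set is a spectrahedral shadow as
soon as it is one near each of its points, because it is then the convex hull of finitely many
patches; and near a boundary point `S` is the intersection of the rigidly convex sets of the
irreducible factors `q` of `p`, so that it suffices to treat a single `q` with `q(a) = 0`.

A Hurwitz argument shows that `q` is real-zero with respect to every point that is joined to `e` by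
a zero-free segment. Laguerre's inequality `φ'² - φ φ'' ≥ 0` on lines through such points near `a`,
the smoothness of `q` at `a`, and the absence of lines through `a` in the zero set then make `q`
strictly quasi-concave at `a`. By Finsler's lemma `q - (c / 2) q²` has negative definite Hessian at
`a` for large `c`, and it has the same sign as `q` near `a`.

For a polynomial `f` with negative definite Hessian at `a`, Jensen's inequality
`L f ≤ f (L X₁, …, L Xₙ)` holds for every pseudo-moment functional `L` of a small cube around `a`:
by induction on monomials, the error of the quadratic Taylor expansion is at most a multiple of the
side length times the second moment, so it is absorbed by the negative quadratic term. Hence the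
moment relaxation of `{f ≥ 0}` on a small cube is exact.
-/

/-! ### Spectrahedra and their shadows -/

section Spectrahedra

open Topology Pointwise

variable {W V E F : Type*} [AddCommGroup W] [Module ℝ W] [AddCommGroup V] [Module ℝ V]

/-- Spectrahedra in a real vector space `W`, coordinate-free and with `W` possibly
infinite-dimensional: solution sets of a linear matrix inequality `A w ⪰ 0` with `A` affine. -/
def IsSpectrahedron (C : Set W) : Prop :=
  ∃ (d : ℕ) (A : W →ᵃ[ℝ] Matrix (Fin d) (Fin d) ℝ),
    (∀ w, (A w).IsSymm) ∧ C = {w | (A w).PosSemidef}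

theorem isSpectrahedron_setOf_posSemidef {J : Type*} [Finite J] (A : W →ᵃ[ℝ] Matrix J J ℝ)
    (hA : ∀ w, (A w).IsSymm) : IsSpectrahedron {w | (A w).PosSemidef} := by
  let i := Finite.equivFin J
  refine ⟨Nat.card J, (Matrix.reindexLinearEquiv ℝ ℝ i i).toLinearMap.toAffineMap.comp A,
    fun w => (hA w).submatrix _, ?_⟩
  ext w
  exact (Matrix.posSemidef_submatrix_equiv i.symm).symm

theorem isSpectrahedron_halfspace (l : W →ₗ[ℝ] ℝ) (c : ℝ) : IsSpectrahedron {w | c ≤ l w} := by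
  let D := Matrix.diagonalLinearMap Unit ℝ ℝ ∘ₗ LinearMap.pi fun _ => (LinearMap.id : ℝ →ₗ[ℝ] ℝ)
  have h := isSpectrahedron_setOf_posSemidef
    (D.toAffineMap.comp (l.toAffineMap - AffineMap.const ℝ W c))
    fun w => Matrix.isSymm_diagonal _
  convert h using 3 with w
  exact (sub_nonneg.symm.trans (by simp)).trans
    (Matrix.posSemidef_diagonal_iff (d := fun _ : Unit => l w - c)).symm

theorem isSpectrahedron_univ : IsSpectrahedron (Set.univ : Set W) := by
  simpa using isSpectrahedron_halfspace (0 : W →ₗ[ℝ] ℝ) 0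

theorem posSemidef_fromBlocks_zero_iff {J K : Type*} [Finite J] [Finite K]
    {A : Matrix J J ℝ} {B : Matrix K K ℝ} :
    (Matrix.fromBlocks A 0 0 B).PosSemidef ↔ A.PosSemidef ∧ B.PosSemidef := by
  cases nonempty_fintype J
  cases nonempty_fintype K
  refine ⟨fun h => ⟨h.submatrix Sum.inl, h.submatrix Sum.inr⟩, fun ⟨hA, hB⟩ =>
    .of_dotProduct_mulVec_nonneg (.fromBlocks hA.isHermitian (by simp) hB.isHermitian)
      fun x => ?_⟩
  have hx : star x ⬝ᵥ (Matrix.fromBlocks A 0 0 B).mulVec x =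
      star (x ∘ Sum.inl) ⬝ᵥ A.mulVec (x ∘ Sum.inl) +
        star (x ∘ Sum.inr) ⬝ᵥ B.mulVec (x ∘ Sum.inr) := by
    simp [Matrix.fromBlocks_mulVec, dotProduct, Fintype.sum_sum_type]
  rw [hx]
  exact add_nonneg (hA.dotProduct_mulVec_nonneg _) (hB.dotProduct_mulVec_nonneg _)

theorem IsSpectrahedron.inter {C D : Set W} (hC : IsSpectrahedron C) (hD : IsSpectrahedron D) :
    IsSpectrahedron (C ∩ D) := by
  obtain ⟨c, A, hA, rfl⟩ := hC
  obtain ⟨d, B, hB, rfl⟩ := hD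
  let blocks : Matrix (Fin c) (Fin c) ℝ × Matrix (Fin d) (Fin d) ℝ →ₗ[ℝ]
      Matrix (Fin c ⊕ Fin d) (Fin c ⊕ Fin d) ℝ :=
    { toFun := fun M => Matrix.fromBlocks M.1 0 0 M.2
      map_add' := fun M N => by simp [Matrix.fromBlocks_add]
      map_smul' := fun r M => by simp [Matrix.fromBlocks_smul] }
  have h := isSpectrahedron_setOf_posSemidef (blocks.toAffineMap.comp (A.prod B))
    fun w => Matrix.isSymm_fromBlocks_iff.2 ⟨hA w, by simp, by simp, hB w⟩
  convert h using 1
  ext w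
  exact posSemidef_fromBlocks_zero_iff.symm

theorem IsSpectrahedron.iInter {ι : Type*} [Finite ι] {C : ι → Set W}
    (hC : ∀ i, IsSpectrahedron (C i)) : IsSpectrahedron (⋂ i, C i) := by
  classical
  cases nonempty_fintype ι
  have hfin : ∀ s : Finset ι, IsSpectrahedron (⋂ i ∈ s, C i) := fun s => by
    induction s using Finset.induction_on with
    | empty => simpa using isSpectrahedron_univ
    | insert i s _ ih => simpa only [Finset.set_biInter_insert] using (hC i).inter ih
  simpa using hfin Finset.univ

theorem IsSpectrahedron.preimage {C : Set W} (hC : IsSpectrahedron C) (f : V →ₗ[ℝ] W) :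
    IsSpectrahedron (f ⁻¹' C) := by
  obtain ⟨d, A, hA, rfl⟩ := hC
  exact ⟨d, A.comp f.toAffineMap, fun v => hA (f v), rfl⟩

theorem isSpectrahedron_hyperplane (l : W →ₗ[ℝ] ℝ) (c : ℝ) : IsSpectrahedron {w | l w = c} := by
  convert (isSpectrahedron_halfspace l c).inter (isSpectrahedron_halfspace (-l) (-c)) using 1
  ext w
  simp only [LinearMap.neg_apply, neg_le_neg_iff, Set.mem_inter_iff, Set.mem_ofPred_eq]
  exact ⟨fun h => ⟨h.ge, h.le⟩, fun h => le_antisymm h.2 h.1⟩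

/-- Shadows of spectrahedra in a real vector space: linear images of spectrahedra in some
`ℝᵐ`. -/
def IsShadow [AddCommGroup E] [Module ℝ E] (S : Set E) : Prop :=
  ∃ (m : ℕ) (C : Set (Fin m → ℝ)) (T : (Fin m → ℝ) →ₗ[ℝ] E), IsSpectrahedron C ∧ S = T '' C

section Module

variable [AddCommGroup E] [Module ℝ E] [AddCommGroup F] [Module ℝ F]

theorem IsShadow.image {S : Set E} (hS : IsShadow S) (T : E →ₗ[ℝ] F) : IsShadow (T '' S) := by
  obtain ⟨m, C, T', hC, rfl⟩ := hS
  exact ⟨m, C, T ∘ₗ T', hC, (Set.image_comp T T' C).symm⟩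

variable [FiniteDimensional ℝ E] [FiniteDimensional ℝ F]

-- Only `A.linear w` and `T w` matter, so the range of `(A.linear, T)` can replace `W`.
theorem IsSpectrahedron.isShadow_image {C : Set W} (hC : IsSpectrahedron C) (T : W →ₗ[ℝ] E) :
    IsShadow (T '' C) := by
  obtain ⟨d, A, hA, rfl⟩ := hC
  let R := LinearMap.range (A.linear.prod T)
  let b := (Module.finBasis ℝ R).equivFun
  let B : R →ᵃ[ℝ] Matrix (Fin d) (Fin d) ℝ :=
    (LinearMap.fst ℝ _ E ∘ₗ R.subtype).toAffineMap + AffineMap.const ℝ R (A 0)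
  let φ : W →ₗ[ℝ] R := (A.linear.prod T).rangeRestrict
  have hφ : ∀ r, ∃ w, φ w = r := (A.linear.prod T).surjective_rangeRestrict
  have hB : ∀ w, B (φ w) = A w := fun w => (congrFun A.decomp w).symm
  have hBsymm : ∀ r, (B r).IsSymm := fun r => by
    obtain ⟨w, rfl⟩ := hφ r
    exact hB w ▸ hA w
  refine ⟨_, _, LinearMap.snd ℝ _ E ∘ₗ R.subtype ∘ₗ b.symm.toLinearMap,
    (isSpectrahedron_setOf_posSemidef B hBsymm).preimage b.symm.toLinearMap, ?_⟩
  ext x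
  constructor
  · rintro ⟨w, hw, rfl⟩
    refine ⟨b (φ w), ?_, by simp [φ]⟩
    simpa [hB] using hw
  · rintro ⟨c, hc, rfl⟩
    obtain ⟨w, hw⟩ := hφ (b.symm c)
    refine ⟨w, ?_, congrArg (fun r : R => r.1.2) hw⟩
    simpa [← hw, hB] using hc

theorem IsSpectrahedron.isShadow {C : Set E} (hC : IsSpectrahedron C) : IsShadow C := by
  simpa using hC.isShadow_image LinearMap.id

theorem IsShadow.prod {S : Set E} {S' : Set F} (hS : IsShadow S) (hS' : IsShadow S') :
    IsShadow (S ×ˢ S') := by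
  obtain ⟨m, C, T, hC, rfl⟩ := hS
  obtain ⟨m', C', T', hC', rfl⟩ := hS'
  convert ((hC.preimage (LinearMap.fst ℝ _ (Fin m' → ℝ))).inter
    (hC'.preimage (LinearMap.snd ℝ (Fin m → ℝ) _))).isShadow_image (T.prodMap T') using 1
  exact (Set.prodMap_image_prod T T' C C').symm

theorem IsShadow.inter {S S' : Set E} (hS : IsShadow S) (hS' : IsShadow S') :
    IsShadow (S ∩ S') := by
  obtain ⟨m, C, T, hC, rfl⟩ := hS
  obtain ⟨m', C', T', hC', rfl⟩ := hS'
  let K := LinearMap.eqLocus (T ∘ₗ LinearMap.fst ℝ _ (Fin m' → ℝ)) (T' ∘ₗ LinearMap.snd ℝ _ _)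
  let p := LinearMap.fst ℝ _ _ ∘ₗ K.subtype
  let p' := LinearMap.snd ℝ _ _ ∘ₗ K.subtype
  convert ((hC.preimage p).inter (hC'.preimage p')).isShadow_image (T ∘ₗ p) using 1
  ext x
  constructor
  · rintro ⟨⟨c, hc, rfl⟩, c', hc', hcc'⟩
    exact ⟨⟨(c, c'), hcc'.symm⟩, ⟨hc, hc'⟩, rfl⟩
  · rintro ⟨⟨⟨c, c'⟩, hcc'⟩, ⟨hc, hc'⟩, rfl⟩
    exact ⟨⟨c, hc, rfl⟩, c', hc', hcc'.symm⟩

end Module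

section Normed

variable [NormedAddCommGroup E] [NormedSpace ℝ E]

theorem eq_zero_of_ray_subset_isBounded {S : Set E} (hS : Bornology.IsBounded S) {x v : E}
    (h : ∀ t : ℝ, 0 ≤ t → t • v + x ∈ S) : v = 0 := by
  have hlim : Filter.Tendsto (fun t : ℝ => t • v + x) Filter.atTop
      (AffineSpace.asymptoticNhds ℝ E v) :=
    (Filter.tendsto_id.atTop_smul_const_tendsto_asymptoticNhds v).asymptoticNhds_vadd_const x
  exact asymptoticCone_subset_singleton_of_bounded hS
    (hlim.frequently (Filter.eventually_ge_atTop 0 |>.mono h).frequently)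

theorem map_eq_zero_of_linear_posSemidef {d : ℕ} {A : W →ᵃ[ℝ] Matrix (Fin d) (Fin d) ℝ}
    (T : W →ₗ[ℝ] E) (hb : Bornology.IsBounded (T '' {w | (A w).PosSemidef}))
    (hne : (T '' {w | (A w).PosSemidef}).Nonempty) {w : W} (hw : (A.linear w).PosSemidef) :
    T w = 0 := by
  obtain ⟨_, w₀, hw₀, rfl⟩ := hne
  refine eq_zero_of_ray_subset_isBounded hb (x := T w₀) fun t ht => ⟨t • w + w₀, ?_, by simp⟩
  have hray : A (t • w + w₀) = t • A.linear w + A w₀ := by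
    rw [← vadd_eq_add, A.map_vadd, map_smul, vadd_eq_add]
  simpa only [Set.mem_ofPred_eq, hray] using (hw.smul ht).add hw₀

/-- The cone over `{1} × S` in `ℝ × E`. The apex condition `x ∈ 0 • S` forces `x = 0`, so this is
the closed cone only for bounded `S`. -/
def homogenization (S : Set E) : Set (ℝ × E) :=
  {z | 0 ≤ z.1 ∧ z.2 ∈ z.1 • S}

variable [FiniteDimensional ℝ E]

protected theorem IsShadow.homogenization {S : Set E} (hS : IsShadow S)
    (hb : Bornology.IsBounded S) (hne : S.Nonempty) : IsShadow (homogenization S) := by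
  obtain ⟨m, C, T, ⟨d, A, hA, rfl⟩, rfl⟩ := hS
  have hA0 : ∀ w, A w = A 0 + A.linear w := fun w => by
    rw [add_comm]; exact congrFun A.decomp w
  let B : ℝ × (Fin m → ℝ) →ₗ[ℝ] Matrix (Fin d) (Fin d) ℝ :=
    (LinearMap.toSpanSingleton ℝ _ (A 0)).coprod A.linear
  have hB : ∀ t w, B (t, w) = t • A 0 + A.linear w := fun t w => rfl
  have hBsymm : ∀ z, (B z).IsSymm := fun z => by
    have hlin : A.linear z.2 = A z.2 - A 0 := by rw [hA0 z.2]; abel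
    have := ((hA 0).smul z.1).add ((hA z.2).sub (hA 0))
    rwa [← hlin] at this
  convert ((isSpectrahedron_setOf_posSemidef B.toAffineMap hBsymm).inter
    (isSpectrahedron_halfspace (LinearMap.fst ℝ ℝ _) 0)).isShadow_image
    (LinearMap.id.prodMap T) using 1
  ext ⟨t, x⟩
  constructor
  · rintro ⟨ht : 0 ≤ t, _, ⟨w, hw, rfl⟩, rfl : t • T w = x⟩
    refine ⟨(t, t • w), ⟨?_, ht⟩, by simp⟩
    have hscale : B (t, t • w) = t • A w := by rw [hB, hA0 w, map_smul, smul_add]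
    simpa [hscale] using Matrix.PosSemidef.smul hw ht
  · rintro ⟨⟨t, w⟩, ⟨hw, ht : 0 ≤ t⟩, h⟩
    obtain ⟨rfl, rfl⟩ := Prod.ext_iff.1 h
    refine ⟨ht, ?_⟩
    change (B (t, w)).PosSemidef at hw
    change T w ∈ t • _
    rcases ht.eq_or_lt with rfl | ht
    · rw [map_eq_zero_of_linear_posSemidef T hb hne (by simpa [hB] using hw)]
      exact (Set.zero_smul_set hne).ge rfl
    · rw [Set.mem_smul_set_iff_inv_smul_mem₀ ht.ne']
      refine ⟨t⁻¹ • w, ?_, map_smul _ _ _⟩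
      have hscale : A (t⁻¹ • w) = t⁻¹ • B (t, w) := by
        rw [hA0, hB, smul_add, inv_smul_smul₀ ht.ne', map_smul]
      simpa only [Set.mem_ofPred_eq, hscale] using hw.smul (inv_nonneg.2 ht.le)

protected theorem IsShadow.convexJoin {S S' : Set E} (hS : IsShadow S) (hS' : IsShadow S')
    (hb : Bornology.IsBounded S) (hb' : Bornology.IsBounded S') (hne : S.Nonempty)
    (hne' : S'.Nonempty) : IsShadow (convexJoin ℝ S S') := by
  let fstL := LinearMap.fst ℝ ℝ E
  let sndL := LinearMap.snd ℝ ℝ E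
  suffices h : convexJoin ℝ S S' = sndL.coprod sndL ''
      (homogenization S ×ˢ homogenization S' ∩ {z | fstL.coprod fstL z = 1}) from
    h ▸ (((hS.homogenization hb hne).prod (hS'.homogenization hb' hne')).inter
      (isSpectrahedron_hyperplane (fstL.coprod fstL) 1).isShadow).image _
  ext x
  simp only [mem_convexJoin]
  constructor
  · rintro ⟨y, hy, y', hy', s, t, hs, ht, hst, rfl⟩
    exact ⟨((s, s • y), (t, t • y')), ⟨⟨⟨hs, Set.smul_mem_smul_set hy⟩,
      ⟨ht, Set.smul_mem_smul_set hy'⟩⟩, hst⟩, rfl⟩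
  · rintro ⟨⟨⟨s, u⟩, ⟨t, u'⟩⟩, ⟨⟨⟨hs, y, hy, rfl : s • y = u⟩,
      ⟨ht, y', hy', rfl : t • y' = u'⟩⟩, hst⟩, rfl⟩
    exact ⟨y, hy, y', hy', s, t, hs, ht, hst, rfl⟩

theorem isShadow_of_local {S : Set E} (hconv : Convex ℝ S) (hcomp : IsCompact S)
    (hne : S.Nonempty) (hloc : ∀ x ∈ S, ∃ U ∈ 𝓝 x, IsShadow (S ∩ U)) : IsShadow S := by
  have hpatch : ∀ x ∈ S, ∃ U ∈ 𝓝 x, ∃ C, IsShadow C ∧ C.Nonempty ∧ S ∩ U ⊆ C ∧ C ⊆ S :=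
    fun x hx => (hloc x hx).imp fun U ⟨hU, h⟩ =>
      ⟨hU, S ∩ U, h, ⟨x, hx, mem_of_mem_nhds hU⟩, subset_rfl, Set.inter_subset_left⟩
  obtain ⟨C, hC, -, hSC, hCS⟩ : ∃ C, IsShadow C ∧ C.Nonempty ∧ S ⊆ C ∧ C ⊆ S := by
    refine hcomp.induction_on (p := fun s => ∃ C, IsShadow C ∧ C.Nonempty ∧ s ⊆ C ∧ C ⊆ S)
      ?_ ?_ ?_ ?_
    · obtain ⟨x, hx⟩ := hne
      obtain ⟨U, -, C, hC, hC0, -, hCS⟩ := hpatch x hx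
      exact ⟨C, hC, hC0, Set.empty_subset C, hCS⟩
    · rintro s t hst ⟨C, hC, hC0, htC, hCS⟩
      exact ⟨C, hC, hC0, hst.trans htC, hCS⟩
    · rintro s t ⟨C, hC, hC0, hsC, hCS⟩ ⟨D, hD, hD0, htD, hDS⟩
      refine ⟨convexJoin ℝ C D, hC.convexJoin hD (hcomp.isBounded.subset hCS)
        (hcomp.isBounded.subset hDS) hC0 hD0, hC0.mono (subset_convexJoin_left hD0), ?_,
        convexJoin_subset hCS hDS hconv⟩
      exact Set.union_subset (hsC.trans (subset_convexJoin_left hD0))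
        (htD.trans (subset_convexJoin_right hC0))
    · intro x hx
      obtain ⟨U, hU, hC⟩ := hpatch x hx
      exact ⟨S ∩ U, Filter.inter_mem self_mem_nhdsWithin (mem_nhdsWithin_of_mem_nhds hU), hC⟩
  rwa [hSC.antisymm hCS]

end Normed

theorem isShadow_closedBall {σ : Type*} [Fintype σ] (a : σ → ℝ) {ε : ℝ} (hε : 0 ≤ ε) :
    IsShadow (Metric.closedBall a ε) := by
  let x := fun i => LinearMap.proj (R := ℝ) (φ := fun _ : σ => ℝ) i
  suffices h : Metric.closedBall a ε =
      ⋂ i, {y | a i - ε ≤ x i y} ∩ {y | -(a i + ε) ≤ (-x i) y} from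
    h ▸ (IsSpectrahedron.iInter fun i => (isSpectrahedron_halfspace (x i) _).inter
      (isSpectrahedron_halfspace (-x i) _)).isShadow
  ext y
  simp only [closedBall_pi a hε, Real.closedBall_eq_Icc, Set.mem_univ_pi, Set.mem_Icc,
    Set.mem_iInter, Set.mem_inter_iff, Set.mem_ofPred_eq, LinearMap.neg_apply, neg_le_neg_iff]
  rfl

theorem IsShadow.isSpectrahedralShadow {n : ℕ} {S : Set (Fin n → ℝ)} (hS : IsShadow S) :
    IsSpectrahedralShadow S := by
  obtain ⟨m, C, T, ⟨d, A, hA, rfl⟩, rfl⟩ := hS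
  have hlin : ∀ w, A.linear w = A w - A 0 := fun w =>
    eq_sub_of_add_eq (congrFun A.decomp w).symm
  have hlinsymm : ∀ w, (A.linear w).IsSymm := fun w => hlin w ▸ (hA w).sub (hA 0)
  refine ⟨m, d, A 0, fun i => A.linear fun j => if i = j then 1 else 0, T, hA 0,
    fun i => hlinsymm _, ?_⟩
  have hsum : ∀ b : Fin m → ℝ, A 0 + ∑ i, b i • A.linear (fun j => if i = j then 1 else 0) =
      A b := fun b => by
    rw [← eq_sub_iff_add_eq', ← hlin]
    exact (A.linear.pi_apply_eq_sum_univ b).symm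
  simp only [hsum]

end Spectrahedra

/-! ### The moment relaxation near a point of negative definite Hessian -/

section MomentRelaxation

open Topology Matrix Metric Asymptotics

variable {σ : Type*}

/-- The polynomials of degree at most one, presented as the span of `1` and the variables. -/
noncomputable def affineForms (σ : Type*) : Submodule ℝ (MvPolynomial σ ℝ) :=
  Submodule.span ℝ (Set.range fun o : Option σ => o.elim 1 X)

/-- Pseudo-moment functionals of level `N` of the cube `closedBall a ε`: linear functionals `L` on
polynomials sharing with the integrals against positive measures on the cube the inequalities
`0 ≤ L (g₁ ⋯ g_k P²)`, for `k ≤ N` factors `g_i` of the form `ε ± (X_j - a_j)` and `P` affine. -/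
def IsPseudoMoment (a : σ → ℝ) (ε : ℝ) : ℕ → (MvPolynomial σ ℝ →ₗ[ℝ] ℝ) → Prop
  | 0, L => ∀ P ∈ affineForms σ, 0 ≤ L (P * P)
  | N + 1, L => IsPseudoMoment a ε N L ∧ ∀ k,
      IsPseudoMoment a ε N (L ∘ₗ LinearMap.mulLeft ℝ (C ε + (X k - C (a k)))) ∧
      IsPseudoMoment a ε N (L ∘ₗ LinearMap.mulLeft ℝ (C ε - (X k - C (a k))))

theorem isSpectrahedron_setOf_span_nonneg {J R : Type*} [Finite J] [CommRing R] [Algebra ℝ R]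
    (b : J → R) :
    IsSpectrahedron {L : R →ₗ[ℝ] ℝ | ∀ P ∈ Submodule.span ℝ (Set.range b), 0 ≤ L (P * P)} := by
  cases nonempty_fintype J
  let A : (R →ₗ[ℝ] ℝ) →ₗ[ℝ] Matrix J J ℝ :=
    { toFun := fun L => .of fun i j => L (b i * b j)
      map_add' := fun _ _ => rfl
      map_smul' := fun _ _ => rfl }
  have hA : ∀ L, (A L).IsSymm := fun L => by
    ext i j
    exact congrArg L (mul_comm _ _)
  have hquad : ∀ (L : R →ₗ[ℝ] ℝ) (v : J → ℝ),
      star v ⬝ᵥ A L *ᵥ v = L ((∑ i, v i • b i) * ∑ i, v i • b i) := fun L v => by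
    have hentry : ∀ i j, A L i j = L (b i * b j) := fun _ _ => rfl
    rw [Finset.sum_mul_sum]
    simp only [dotProduct, mulVec, hentry, Pi.star_apply, star_trivial, map_sum, Finset.mul_sum,
      smul_mul_smul_comm, map_smul, smul_eq_mul]
    exact Finset.sum_congr rfl fun i _ => Finset.sum_congr rfl fun j _ => by ring
  convert isSpectrahedron_setOf_posSemidef A.toAffineMap hA using 3 with L
  refine ⟨fun h => .of_dotProduct_mulVec_nonneg (hA L) fun v => ?_, fun h P hP => ?_⟩
  · refine (hquad L v).symm ▸ h _ (Submodule.sum_mem _ fun i _ => ?_)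
    exact Submodule.smul_mem _ _ (Submodule.subset_span ⟨i, rfl⟩)
  · obtain ⟨v, rfl⟩ := Submodule.mem_span_range_iff_exists_fun ℝ |>.1 hP
    exact hquad L v ▸ h.dotProduct_mulVec_nonneg v

theorem isSpectrahedron_setOf_isPseudoMoment [Finite σ] (a : σ → ℝ) (ε : ℝ) (N : ℕ) :
    IsSpectrahedron {L | IsPseudoMoment a ε N L} := by
  induction N with
  | zero => exact isSpectrahedron_setOf_span_nonneg _
  | succ N ih =>
    have hpre (g : MvPolynomial σ ℝ) : IsSpectrahedron
        {L | IsPseudoMoment a ε N (L ∘ₗ LinearMap.mulLeft ℝ g)} :=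
      ih.preimage (LinearMap.mulLeft ℝ g).dualMap
    convert ih.inter (.iInter fun k => (hpre (C ε + (X k - C (a k)))).inter
      (hpre (C ε - (X k - C (a k))))) using 1
    ext L
    simp only [Set.mem_inter_iff, Set.mem_iInter]
    rfl

namespace IsPseudoMoment

variable {a : σ → ℝ} {ε : ℝ} {M N : ℕ} {L : MvPolynomial σ ℝ →ₗ[ℝ] ℝ}

protected theorem mono (hL : IsPseudoMoment a ε N L) (hMN : M ≤ N) : IsPseudoMoment a ε M L := by
  induction hMN with
  | refl => exact hL
  | step _ ih => exact ih hL.1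

theorem mul_self_nonneg (hL : IsPseudoMoment a ε N L) {P : MvPolynomial σ ℝ}
    (hP : P ∈ affineForms σ) : 0 ≤ L (P * P) :=
  hL.mono N.zero_le P hP

theorem abs_apply_mul_le (hL : IsPseudoMoment a ε (N + 1) L) (k : σ) {P Q : MvPolynomial σ ℝ}
    {c : ℝ} (h : ∀ L', IsPseudoMoment a ε N L' → |L' P| ≤ c * L' Q) :
    |L ((X k - C (a k)) * P)| ≤ c * (ε * L Q) := by
  have hplus := h _ (hL.2 k).1
  have hminus := h _ (hL.2 k).2
  simp only [LinearMap.comp_apply, LinearMap.mulLeft_apply, add_mul, sub_mul _ _ P, sub_mul _ _ Q,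
    map_add, map_sub, C_mul', map_smul, smul_eq_mul] at hplus hminus ⊢
  rw [abs_le] at *
  constructor <;> linarith

end IsPseudoMoment

theorem isPseudoMoment_smul_aeval {a x : σ → ℝ} {ε : ℝ} (hx : ∀ i, |x i - a i| ≤ ε) (N : ℕ)
    {c : ℝ} (hc : 0 ≤ c) : IsPseudoMoment a ε N (c • (aeval x).toLinearMap) := by
  induction N generalizing c with
  | zero =>
    intro P _
    simpa using mul_nonneg hc (mul_self_nonneg (aeval x P))
  | succ N ih =>
    have hmul (g : MvPolynomial σ ℝ) : (c • (aeval x).toLinearMap) ∘ₗ LinearMap.mulLeft ℝ g =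
        (c * aeval x g) • (aeval x).toLinearMap := by
      ext P
      simp [mul_assoc]
    refine ⟨ih hc, fun k => ?_⟩
    have hk := abs_le.1 (hx k)
    rw [hmul, hmul]
    constructor <;> refine ih (mul_nonneg hc ?_) <;>
      simp only [aeval_eq_eval, map_add, map_sub, eval_C, eval_X] <;> linarith

/-- The gradient of a polynomial at a point. -/
noncomputable def grad (m : MvPolynomial σ ℝ) (x : σ → ℝ) : σ → ℝ :=
  fun i => eval x (pderiv i m)

/-- The Hessian matrix of a polynomial at a point. -/
noncomputable def hessian (m : MvPolynomial σ ℝ) (x : σ → ℝ) : Matrix σ σ ℝ :=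
  .of fun i j => eval x (pderiv i (pderiv j m))

theorem grad_mul_X [DecidableEq σ] (m : MvPolynomial σ ℝ) (k : σ) (x : σ → ℝ) :
    grad (m * X k) x = x k • grad m x + eval x m • Pi.single k 1 := by
  ext i
  by_cases hi : i = k <;>
    simp [grad, Derivation.leibniz, pderiv_X, hi, eq_comm (a := k), add_comm]

theorem hessian_mul_X [DecidableEq σ] (m : MvPolynomial σ ℝ) (k : σ) (x : σ → ℝ) :
    hessian (m * X k) x = x k • hessian m x + vecMulVec (Pi.single k 1) (grad m x) +
      (vecMulVec (Pi.single k 1) (grad m x))ᵀ := by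
  ext i j
  by_cases hj : j = k <;> by_cases hi : i = k <;>
    simp [hessian, grad, vecMulVec_apply, Derivation.leibniz, pderiv_X, Pi.single_apply, hi, hj,
      eq_comm (a := k)] <;> ring

variable [Fintype σ]

/-- The linear form `∑ vᵢ (Xᵢ - xᵢ)`. -/
noncomputable def centeredLinear (x : σ → ℝ) : (σ → ℝ) →ₗ[ℝ] MvPolynomial σ ℝ :=
  Fintype.linearCombination ℝ fun i => X i - C (x i)

/-- The quadratic form `∑ A i j (Xᵢ - xᵢ) (Xⱼ - xⱼ)`. -/
noncomputable def centeredQuad (x : σ → ℝ) : Matrix σ σ ℝ →ₗ[ℝ] MvPolynomial σ ℝ where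
  toFun A := ∑ i, ∑ j, A i j • ((X i - C (x i)) * (X j - C (x j)))
  map_add' A B := by simp only [Matrix.add_apply, add_smul, Finset.sum_add_distrib]
  map_smul' r A := by
    simp only [Matrix.smul_apply, smul_assoc, Finset.smul_sum, RingHom.id_apply]

/-- The remainder of the first order Taylor expansion of `m` at `x`. -/
noncomputable def taylorRemainder (m : MvPolynomial σ ℝ) (x : σ → ℝ) : MvPolynomial σ ℝ :=
  m - C (eval x m) - centeredLinear x (grad m x)

theorem centeredLinear_mem_affineForms (x w : σ → ℝ) : centeredLinear x w ∈ affineForms σ := by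
  have hconst (c : ℝ) : C c ∈ affineForms σ := by
    simpa [smul_eq_C_mul] using Submodule.smul_mem (affineForms σ) c
      (Submodule.subset_span ⟨none, rfl⟩)
  exact Submodule.sum_mem _ fun i _ => Submodule.smul_mem _ _ <|
    Submodule.sub_mem _ (Submodule.subset_span ⟨some i, rfl⟩) (hconst _)

theorem centeredQuad_vecMulVec (x v w : σ → ℝ) :
    centeredQuad x (vecMulVec v w) = centeredLinear x v * centeredLinear x w := by
  simp only [centeredQuad, centeredLinear, Fintype.linearCombination_apply, Finset.sum_mul_sum,
    vecMulVec_apply, smul_mul_smul_comm, LinearMap.coe_mk, AddHom.coe_mk]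

theorem centeredQuad_transpose (x : σ → ℝ) (A : Matrix σ σ ℝ) :
    centeredQuad x Aᵀ = centeredQuad x A := by
  simp only [centeredQuad, LinearMap.coe_mk, AddHom.coe_mk, transpose_apply]
  rw [Finset.sum_comm]
  simp only [mul_comm]

theorem taylorRemainder_mul_X [DecidableEq σ] (m : MvPolynomial σ ℝ) (k : σ) (x : σ → ℝ) :
    taylorRemainder (m * X k) x =
      X k * taylorRemainder m x + centeredQuad x (vecMulVec (Pi.single k 1) (grad m x)) := by
  have hsingle : centeredLinear x (Pi.single k 1) = X k - C (x k) := by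
    simp [centeredLinear]
  rw [taylorRemainder, taylorRemainder, grad_mul_X, centeredQuad_vecMulVec, hsingle]
  simp only [map_add, map_smul, hsingle, smul_eq_C_mul, map_mul, eval_X]
  ring

theorem dotProduct_mulVec_eq_sum (A : Matrix σ σ ℝ) (v w : σ → ℝ) :
    v ⬝ᵥ A *ᵥ w = ∑ i, ∑ j, v i * w j * A i j := by
  simp only [dotProduct, mulVec, Finset.mul_sum]
  exact Finset.sum_congr rfl fun i _ => Finset.sum_congr rfl fun j _ => by ring

theorem abs_dotProduct_mulVec_le (A : Matrix σ σ ℝ) (v : σ → ℝ) :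
    |v ⬝ᵥ A *ᵥ v| ≤ (∑ i, ∑ j, |A i j|) * (v ⬝ᵥ v) := by
  have hle (i : σ) : v i * v i ≤ v ⬝ᵥ v :=
    Finset.single_le_sum (f := fun i => v i * v i) (fun i _ => mul_self_nonneg _)
      (Finset.mem_univ i)
  simp only [Finset.sum_mul, dotProduct_mulVec_eq_sum]
  refine (Finset.abs_sum_le_sum_abs _ _).trans (Finset.sum_le_sum fun i _ => ?_)
  refine (Finset.abs_sum_le_sum_abs _ _).trans (Finset.sum_le_sum fun j _ => ?_)
  have hij : |v i| * |v j| ≤ v ⬝ᵥ v := by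
    nlinarith [sq_nonneg (|v i| - |v j|), abs_mul_abs_self (v i), abs_mul_abs_self (v j),
      hle i, hle j]
  rw [abs_mul, abs_mul, mul_comm]
  exact mul_le_mul_of_nonneg_left hij (abs_nonneg _)

namespace IsPseudoMoment

variable {a : σ → ℝ} {ε : ℝ} {N : ℕ} {L : MvPolynomial σ ℝ →ₗ[ℝ] ℝ}

theorem centeredQuad_nonneg (hL : IsPseudoMoment a ε N L) (x : σ → ℝ) {A : Matrix σ σ ℝ}
    (hA : ∀ v, 0 ≤ v ⬝ᵥ A *ᵥ v) : 0 ≤ L (centeredQuad x A) := by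
  have hpsd : ((1 / 2 : ℝ) • (A + Aᵀ)).PosSemidef := by
    refine .of_dotProduct_mulVec_nonneg (IsSymm.ext fun i j => by simp [add_comm]) fun v => ?_
    simpa [smul_mulVec, add_mulVec, mulVec_transpose, dotProduct_comm v (v ᵥ* A),
      ← dotProduct_mulVec, ← two_mul] using hA v
  have hsymm : centeredQuad x ((1 / 2 : ℝ) • (A + Aᵀ)) = centeredQuad x A := by
    rw [map_smul, map_add, centeredQuad_transpose, ← two_smul ℝ, smul_smul]
    norm_num
  obtain ⟨d, B, hB⟩ := posSemidef_iff_eq_sum_vecMulVec.1 hpsd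
  rw [← hsymm, hB, map_sum, map_sum]
  refine Finset.sum_nonneg fun k _ => ?_
  rw [star_trivial, centeredQuad_vecMulVec]
  exact hL.mul_self_nonneg (centeredLinear_mem_affineForms x _)

theorem centeredQuad_one_nonneg [DecidableEq σ] (hL : IsPseudoMoment a ε N L) (x : σ → ℝ) :
    0 ≤ L (centeredQuad x 1) :=
  hL.centeredQuad_nonneg x fun v => by simpa using dotProduct_star_self_nonneg v

theorem abs_centeredQuad_le [DecidableEq σ] (hL : IsPseudoMoment a ε N L) (x : σ → ℝ)
    (A : Matrix σ σ ℝ) :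
    |L (centeredQuad x A)| ≤ (∑ i, ∑ j, |A i j|) * L (centeredQuad x 1) := by
  have hA (v : σ → ℝ) := abs_le.1 (abs_dotProduct_mulVec_le A v)
  have hsub := hL.centeredQuad_nonneg x (A := (∑ i, ∑ j, |A i j|) • 1 - A) fun v => by
    simp [sub_mulVec, smul_mulVec, (hA v).2]
  have hadd := hL.centeredQuad_nonneg x (A := (∑ i, ∑ j, |A i j|) • 1 + A) fun v => by
    simp only [add_mulVec, smul_mulVec, one_mulVec, dotProduct_add, dotProduct_smul, smul_eq_mul]
    linarith [(hA v).1]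
  simp only [map_sub, map_add, map_smul, smul_eq_mul] at hsub hadd
  exact abs_le.2 ⟨by linarith, by linarith⟩

theorem abs_centeredQuad_vecMulVec_single_le [DecidableEq σ] (hL : IsPseudoMoment a ε N L)
    (x : σ → ℝ) (k : σ) (w : σ → ℝ) :
    |L (centeredQuad x (vecMulVec (Pi.single k 1) w))| ≤
      (∑ j, |w j|) * L (centeredQuad x 1) := by
  have hsum : ∑ i, ∑ j, |vecMulVec (Pi.single k 1) w i j| = ∑ j, |w j| := by
    simp [vecMulVec_apply, Pi.single_apply, apply_ite abs]
  exact hsum ▸ hL.abs_centeredQuad_le x _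

end IsPseudoMoment

theorem sum_abs_grad_sub_isBigO (m : MvPolynomial σ ℝ) (a : σ → ℝ) :
    (fun x => ∑ j, |grad m x j - grad m a j|) =O[𝓝 a] fun x => x - a :=
  IsBigO.fun_sum fun j _ => (AnalyticOnNhd.eval_mvPolynomial (pderiv j m) a
    trivial).differentiableAt.isBigO_sub.norm_left

/-- The error of the second order Taylor expansion at `x`, with the Hessian frozen at `a`. -/
noncomputable def secondOrderError (a : σ → ℝ) (m : MvPolynomial σ ℝ) (x : σ → ℝ) :
    MvPolynomial σ ℝ :=
  taylorRemainder m x - (1 / 2 : ℝ) • centeredQuad x (hessian m a)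

theorem secondOrderError_C (a : σ → ℝ) (c : ℝ) (x : σ → ℝ) : secondOrderError a (C c) x = 0 := by
  have hgrad : grad (C c) x = 0 := by ext; simp [grad]
  have hhess : hessian (C c) a = 0 := by ext; simp [hessian]
  simp [secondOrderError, taylorRemainder, hgrad, hhess]

theorem secondOrderError_add (a : σ → ℝ) (p q : MvPolynomial σ ℝ) (x : σ → ℝ) :
    secondOrderError a (p + q) x = secondOrderError a p x + secondOrderError a q x := by
  have hgrad : grad (p + q) x = grad p x + grad q x := by ext; simp [grad]
  have hhess : hessian (p + q) a = hessian p a + hessian q a := by ext; simp [hessian]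
  simp only [secondOrderError, taylorRemainder, hgrad, hhess, map_add, smul_add]
  ring

theorem secondOrderError_mul_X [DecidableEq σ] (a : σ → ℝ) (m : MvPolynomial σ ℝ) (k : σ)
    (x : σ → ℝ) : secondOrderError a (m * X k) x =
      (X k - C (a k)) * taylorRemainder m x +
        centeredQuad x (vecMulVec (Pi.single k 1) (grad m x - grad m a)) +
        a k • secondOrderError a m x := by
  simp only [secondOrderError, taylorRemainder_mul_X, hessian_mul_X, map_add, map_smul,
    centeredQuad_transpose, vecMulVec_sub, map_sub]
  simp only [smul_eq_C_mul, mul_add, mul_sub]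
  have hhalf : (C (1 / 2) : MvPolynomial σ ℝ) * 2 = 1 := by
    rw [← map_ofNat C, ← C_mul]
    norm_num
  linear_combination
    -centeredQuad x (vecMulVec (Pi.single k 1) (grad m a)) * hhalf

theorem IsPseudoMoment.abs_taylorRemainder_le [DecidableEq σ] {a x : σ → ℝ} {ε K : ℝ} {N : ℕ}
    {L : MvPolynomial σ ℝ →ₗ[ℝ] ℝ} {m : MvPolynomial σ ℝ} (hL : IsPseudoMoment a ε N L)
    (h : |L (secondOrderError a m x)| ≤ K * L (centeredQuad x 1)) :
    |L (taylorRemainder m x)| ≤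
      (K + ∑ i, ∑ j, |hessian m a i j|) * L (centeredQuad x 1) := by
  have hquad := hL.abs_centeredQuad_le x (hessian m a)
  rw [secondOrderError, map_sub, map_smul, smul_eq_mul] at h
  rw [abs_le] at *
  constructor <;> linarith

theorem exists_abs_secondOrderError_le [DecidableEq σ] (a : σ → ℝ) (m : MvPolynomial σ ℝ) :
    ∃ (N : ℕ) (K : ℝ), 0 ≤ K ∧ ∀ᶠ ε in 𝓝[>] (0 : ℝ), ∀ x ∈ closedBall a ε, ∀ L,
      IsPseudoMoment a ε N L →
        |L (secondOrderError a m x)| ≤ K * (ε * L (centeredQuad x 1)) := by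
  induction m using MvPolynomial.induction_on with
  | C c => exact ⟨0, 0, le_rfl, .of_forall fun ε x _ L _ => by simp [secondOrderError_C]⟩
  | add p q hp hq =>
    obtain ⟨N, K, hK, hp⟩ := hp
    obtain ⟨N', K', hK', hq⟩ := hq
    refine ⟨max N N', K + K', by positivity, ?_⟩
    filter_upwards [hp, hq] with ε hp hq x hx L hL
    rw [secondOrderError_add, map_add, add_mul]
    exact (abs_add_le _ _).trans (add_le_add (hp x hx L (hL.mono (le_max_left _ _)))
      (hq x hx L (hL.mono (le_max_right _ _))))
  | mul_X m k hm =>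
    obtain ⟨N, K, hK, hm⟩ := hm
    obtain ⟨G, hG, hgrad⟩ := (sum_abs_grad_sub_isBigO m a).exists_nonneg
    refine ⟨N + 1, K + ∑ i, ∑ j, |hessian m a i j| + G + |a k| * K, by positivity, ?_⟩
    filter_upwards [hm, nhdsWithin_le_nhds (eventually_closedBall_subset hgrad.bound),
      Ioc_mem_nhdsGT one_pos] with ε hm hgrad hε x hx L hL
    have hfirst := hL.abs_apply_mul_le k fun L' hL' =>
      hL'.abs_taylorRemainder_le <| (hm x hx L' hL').trans <| mul_le_mul_of_nonneg_left
        (mul_le_of_le_one_left (hL'.centeredQuad_one_nonneg x) hε.2) hK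
    have hsum : ∑ j, |(grad m x - grad m a) j| ≤ G * ε :=
      ((le_abs_self _).trans (hgrad hx)).trans
        (mul_le_mul_of_nonneg_left (mem_closedBall_iff_norm.1 hx) hG)
    have hsecond := (hL.abs_centeredQuad_vecMulVec_single_le x k _).trans
      (mul_le_mul_of_nonneg_right hsum (hL.centeredQuad_one_nonneg x))
    have hthird := mul_le_mul_of_nonneg_left (hm x hx L hL.1) (abs_nonneg (a k))
    rw [← abs_mul] at hthird
    rw [secondOrderError_mul_X, map_add, map_add, map_smul, smul_eq_mul]
    refine (abs_add_three _ _ _).trans ?_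
    linarith

theorem exists_pseudoMoment_jensen {f : MvPolynomial σ ℝ} {a : σ → ℝ} {δ : ℝ} (hδ : 0 < δ)
    (hf : ∀ v, v ⬝ᵥ hessian f a *ᵥ v ≤ -δ * (v ⬝ᵥ v)) :
    ∃ N, ∀ᶠ ε in 𝓝[>] (0 : ℝ), ∀ L, IsPseudoMoment a ε N L → L 1 = 1 →
      (fun i => L (X i)) ∈ closedBall a ε → L f ≤ eval (fun i => L (X i)) f := by
  classical
  obtain ⟨N, K, -, herror⟩ := exists_abs_secondOrderError_le a f
  have hsmall : ∀ᶠ ε in 𝓝[>] (0 : ℝ), K * ε < δ / 2 :=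
    nhdsWithin_le_nhds <| (continuous_const_mul K).continuousAt.eventually_lt_const (by simpa)
  refine ⟨N, ?_⟩
  filter_upwards [herror, hsmall] with ε herror hsmall L hL hone hx
  set x := fun i => L (X i)
  have hlinear : L (centeredLinear x (grad f x)) = 0 := by
    simp [centeredLinear, Fintype.linearCombination_apply, C_eq_smul_one, hone, x]
  have hhess : 0 ≤ L (centeredQuad x (-δ • 1 - hessian f a)) :=
    hL.centeredQuad_nonneg x fun v => by
      simpa [sub_mulVec, neg_mulVec, smul_mulVec] using hf v
  have hquad := (le_abs_self _).trans (herror x hx L hL)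
  simp only [secondOrderError, taylorRemainder, map_sub, map_smul, smul_eq_mul, hlinear,
    C_eq_smul_one (a := eval x f), hone] at hquad hhess
  nlinarith [hL.centeredQuad_one_nonneg x]

theorem IsPseudoMoment.mem_closedBall {a : σ → ℝ} {ε : ℝ} (hε : 0 ≤ ε) {N : ℕ}
    {L : MvPolynomial σ ℝ →ₗ[ℝ] ℝ} (hL : IsPseudoMoment a ε (N + 1) L) (hone : L 1 = 1) :
    (fun i => L (X i)) ∈ closedBall a ε := by
  have h1 : (1 : MvPolynomial σ ℝ) ∈ affineForms σ := Submodule.subset_span ⟨none, rfl⟩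
  refine mem_closedBall_iff_norm.2 ((pi_norm_le_iff_of_nonneg hε).2 fun k => abs_le.2 ?_)
  have hplus := (hL.2 k).1.mul_self_nonneg h1
  have hminus := (hL.2 k).2.mul_self_nonneg h1
  simp only [LinearMap.comp_apply, LinearMap.mulLeft_apply, mul_one, map_add, map_sub,
    C_eq_smul_one, map_smul, hone, smul_eq_mul] at hplus hminus
  rw [Pi.sub_apply]
  constructor <;> linarith

theorem eventually_isShadow_setOf_nonneg_inter_closedBall {f : MvPolynomial σ ℝ} {a : σ → ℝ}
    {δ : ℝ} (hδ : 0 < δ) (hf : ∀ v, v ⬝ᵥ hessian f a *ᵥ v ≤ -δ * (v ⬝ᵥ v)) :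
    ∀ᶠ ε in 𝓝[>] (0 : ℝ), IsShadow ({x | 0 ≤ eval x f} ∩ closedBall a ε) := by
  obtain ⟨N, hjensen⟩ := exists_pseudoMoment_jensen hδ hf
  filter_upwards [hjensen, self_mem_nhdsWithin] with ε hjensen hε
  let C := {L | IsPseudoMoment a ε (N + 1) L} ∩ {L | L 1 = 1} ∩ {L | 0 ≤ L f}
  let T : (MvPolynomial σ ℝ →ₗ[ℝ] ℝ) →ₗ[ℝ] (σ → ℝ) := LinearMap.pi fun i => LinearMap.applyₗ (X i)
  have hC : IsSpectrahedron C :=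
    ((isSpectrahedron_setOf_isPseudoMoment a ε (N + 1)).inter
      (isSpectrahedron_hyperplane (LinearMap.applyₗ 1) 1)).inter
      (isSpectrahedron_halfspace (LinearMap.applyₗ f) 0)
  suffices T '' C = {x | 0 ≤ eval x f} ∩ closedBall a ε from this ▸ hC.isShadow_image T
  refine Set.Subset.antisymm ?_ fun x ⟨hfx, hx⟩ => ?_
  · rintro _ ⟨L, ⟨⟨hL, hone⟩, hLf⟩, rfl⟩
    have hball := hL.mem_closedBall hε.le hone
    exact ⟨hLf.trans (hjensen L (hL.mono N.le_succ) hone hball), hball⟩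
  · have hxi (i : σ) : |x i - a i| ≤ ε := (norm_le_pi_norm (x - a) i).trans
      (mem_closedBall_iff_norm.1 hx)
    refine ⟨(aeval x).toLinearMap, ⟨⟨?_, by simp⟩, by simpa [aeval_eq_eval] using hfx⟩, ?_⟩
    · simpa using isPseudoMoment_smul_aeval hxi (N + 1) zero_le_one
    · ext i
      simp [T]

end MomentRelaxation

/-! ### Strictly quasi-concave boundaries -/

section StrictQuasiConcave

open Topology Matrix Metric

theorem exists_forall_ne_zero_lt_mul {E : Type*} [NormedAddCommGroup E] [NormedSpace ℝ E]
    [FiniteDimensional ℝ E] {P Q : E → ℝ} (hP : Continuous P) (hQ : Continuous Q)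
    (hPsmul : ∀ (r : ℝ) v, P (r • v) = r ^ 2 * P v) (hQsmul : ∀ (r : ℝ) v, Q (r • v) = r ^ 2 * Q v)
    (hPnonneg : ∀ v, 0 ≤ P v) (h : ∀ v, v ≠ 0 → P v = 0 → Q v < 0) :
    ∃ c : ℝ, ∀ v, v ≠ 0 → Q v < c * P v := by
  let U (c : ℝ) : Set E := {v | Q v < c * P v}
  have hmono : Monotone U := fun c d hcd v hv =>
    lt_of_lt_of_le hv (mul_le_mul_of_nonneg_right hcd (hPnonneg v))
  have hcover : sphere (0 : E) 1 ⊆ ⋃ c, U c := fun v hv => by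
    rw [Set.mem_iUnion]
    rcases (hPnonneg v).eq_or_lt with hv0 | hvpos
    · exact ⟨0, by simpa [U] using h v (ne_of_mem_sphere hv one_ne_zero) hv0.symm⟩
    · exact ⟨Q v / P v + 1, (div_lt_iff₀ hvpos).1 (lt_add_one _)⟩
  obtain ⟨c, hc⟩ := (isCompact_sphere (0 : E) 1).elim_directed_cover U
    (fun c => isOpen_lt hQ (hP.const_mul c)) hcover hmono.directed_le
  refine ⟨c, fun v hv => ?_⟩
  have hunit : Q (‖v‖⁻¹ • v) < c * P (‖v‖⁻¹ • v) :=
    hc (by simp [norm_smul, inv_mul_cancel₀ (norm_ne_zero_iff.2 hv)])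
  rw [hQsmul, hPsmul, mul_left_comm] at hunit
  exact lt_of_mul_lt_mul_left hunit (sq_nonneg _)

/-- Finsler's lemma. -/
theorem exists_dotProduct_sub_vecMulVec_le {σ : Type*} [Fintype σ] {A : Matrix σ σ ℝ} {g : σ → ℝ}
    (h : ∀ v, v ≠ 0 → v ⬝ᵥ g = 0 → v ⬝ᵥ A *ᵥ v < 0) :
    ∃ c δ : ℝ, 0 < δ ∧ ∀ v, v ⬝ᵥ (A - c • vecMulVec g g) *ᵥ v ≤ -δ * (v ⬝ᵥ v) := by
  classical
  have hcont (B : Matrix σ σ ℝ) : Continuous fun v => v ⬝ᵥ B *ᵥ v := by fun_prop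
  have hsmul (B : Matrix σ σ ℝ) (r : ℝ) (v : σ → ℝ) :
      (r • v) ⬝ᵥ B *ᵥ (r • v) = r ^ 2 * (v ⬝ᵥ B *ᵥ v) := by
    simp [mulVec_smul, sq, mul_assoc]
  have hgg (v : σ → ℝ) : v ⬝ᵥ vecMulVec g g *ᵥ v = (v ⬝ᵥ g) ^ 2 := by
    simp [vecMulVec_mulVec, dotProduct_comm g v, sq]
  obtain ⟨c, hc⟩ := exists_forall_ne_zero_lt_mul (hcont (vecMulVec g g)) (hcont A)
    (hsmul _) (hsmul _) (fun v => hgg v ▸ sq_nonneg _)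
    fun v hv hv0 => h v hv (pow_eq_zero_iff two_ne_zero |>.1 (hgg v ▸ hv0))
  let B := c • vecMulVec g g - A
  have hB (v : σ → ℝ) (hv : v ≠ 0) : 0 < v ⬝ᵥ B *ᵥ v := by
    simpa [B, sub_mulVec, smul_mulVec] using hc v hv
  obtain ⟨d, hd⟩ := exists_forall_ne_zero_lt_mul (hcont B) (hcont 1) (hsmul B) (hsmul 1)
    (fun v => (eq_or_ne v 0).elim (fun hv => by simp [hv]) fun hv => (hB v hv).le)
    fun v hv hv0 => absurd hv0 (hB v hv).ne'
  refine ⟨c, (max d 1)⁻¹, by positivity, fun v => ?_⟩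
  rcases eq_or_ne v 0 with rfl | hv
  · simp
  have hle : v ⬝ᵥ v ≤ max d 1 * (v ⬝ᵥ B *ᵥ v) := by
    have := hd v hv
    rw [one_mulVec] at this
    exact this.le.trans (mul_le_mul_of_nonneg_right (le_max_left _ _) (hB v hv).le)
  have hneg : v ⬝ᵥ (A - c • vecMulVec g g) *ᵥ v = -(v ⬝ᵥ B *ᵥ v) := by
    rw [← neg_sub, neg_mulVec, dotProduct_neg]
  rw [hneg, neg_mul, neg_le_neg_iff]
  exact (inv_mul_le_iff₀ (by positivity)).2 hle

theorem hessian_sub_C_mul_sq {σ : Type*} {q : MvPolynomial σ ℝ} {a : σ → ℝ}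
    (hq : eval a q = 0) (c : ℝ) :
    hessian (q - C (c / 2) * q ^ 2) a = hessian q a - c • vecMulVec (grad q a) (grad q a) := by
  ext i j
  simp only [hessian, grad, sq, of_apply, Matrix.sub_apply, Matrix.smul_apply, vecMulVec_apply,
    Derivation.leibniz, derivation_C, smul_eq_mul, map_add, map_sub, map_mul, eval_C, hq, mul_zero,
    zero_mul, add_zero, zero_add]
  ring

theorem StrictQuasiConcaveAt.eventually_isShadow {n : ℕ} {q : MvPolynomial (Fin n) ℝ}
    {a : Fin n → ℝ} (h : StrictQuasiConcaveAt q a) (hq : eval a q = 0) :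
    ∀ᶠ ε in 𝓝[>] (0 : ℝ), IsShadow ({x | 0 ≤ eval x q} ∩ closedBall a ε) := by
  obtain ⟨c, δ, hδ, hneg⟩ := exists_dotProduct_sub_vecMulVec_le (A := hessian q a) (g := grad q a)
    fun v hv hgv => by
      rw [dotProduct_mulVec_eq_sum]
      exact h v hv hgv
  have hfactor : ∀ᶠ x in 𝓝 a, 0 < 1 - c / 2 * eval x q :=
    (continuous_const.sub (q.continuous_eval.const_mul (c / 2))).continuousAt.eventually_const_lt
      (by simp [hq])
  filter_upwards [eventually_isShadow_setOf_nonneg_inter_closedBall hδ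
      (f := q - C (c / 2) * q ^ 2) (by rwa [hessian_sub_C_mul_sq hq]),
    nhdsWithin_le_nhds (eventually_closedBall_subset hfactor)] with ε hshadow hfactor
  have hpos {x} (hx : x ∈ closedBall a ε) :
      0 ≤ eval x (q - C (c / 2) * q ^ 2) ↔ 0 ≤ eval x q := by
    have hfac : eval x (q - C (c / 2) * q ^ 2) = (1 - c / 2 * eval x q) * eval x q := by
      simp only [map_sub, map_mul, eval_C, map_pow]
      ring
    rw [hfac]
    exact mul_nonneg_iff_of_pos_left (hfactor hx)
  convert hshadow using 1
  exact Set.ext fun x => and_congr_left fun hx => (hpos hx).symm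

end StrictQuasiConcave

/-! ### Zero-free families of holomorphic functions -/

section ZeroFreeFamilies

open Topology Metric Filter

variable {X : Type*} [TopologicalSpace X] {F : X → ℂ → ℂ} {c : ℂ} {r : ℝ}

theorem le_norm_of_le_norm_sphere {f : ℂ → ℂ} (hf : Differentiable ℂ f) (hr : r ≠ 0) {m : ℝ}
    (hm : 0 < m) (hs : ∀ w ∈ sphere c r, m ≤ ‖f w‖) (hne : ∀ w ∈ closedBall c r, f w ≠ 0) :
    ∀ w ∈ closedBall c r, m ≤ ‖f w‖ := fun w hw => by
  have hdiff : DiffContOnCl ℂ (fun w => (f w)⁻¹) (ball c r) :=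
    DifferentiableOn.diffContOnCl <| closure_ball c hr ▸ hf.differentiableOn.inv hne
  have hle : ‖(f w)⁻¹‖ ≤ m⁻¹ :=
    Complex.norm_le_of_forall_mem_frontier_norm_le isBounded_ball hdiff
      (fun z hz => norm_inv (f z) ▸ inv_anti₀ hm (hs z (frontier_ball c hr ▸ hz)))
      (closure_ball c hr ▸ hw)
  rw [norm_inv] at hle
  exact (inv_le_inv₀ (norm_pos_iff.2 (hne w hw)) hm).1 hle

theorem ne_zero_of_frequently_ne_zero (hF : Continuous (Function.uncurry F))
    (hd : ∀ x, Differentiable ℂ (F x)) (hr : 0 < r) {x : X} (hs : ∀ w ∈ sphere c r, F x w ≠ 0)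
    (h : ∃ᶠ x' in 𝓝 x, ∀ w ∈ closedBall c r, F x' w ≠ 0) : ∀ w ∈ closedBall c r, F x w ≠ 0 := by
  have hFx : Continuous (F x) := (hd x).continuous
  obtain ⟨w₀, hw₀, hmin⟩ := (isCompact_sphere c r).exists_isMinOn
    ((NormedSpace.sphere_nonempty (E := ℂ)).2 hr.le) hFx.norm.continuousOn
  have hm : 0 < ‖F x w₀‖ := norm_pos_iff.2 (hs w₀ hw₀)
  have hsphere : ∀ᶠ x' in 𝓝 x, ∀ w ∈ sphere c r, ‖F x w₀‖ / 2 < ‖F x' w‖ :=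
    (isCompact_sphere c r).eventually_forall_of_forall_eventually fun w hw =>
      hF.norm.continuousAt.eventually_const_lt ((half_lt_self hm).trans_le (hmin hw))
  intro w hw
  have hclosed : IsClosed {x' | ‖F x w₀‖ / 2 ≤ ‖F x' w‖} :=
    isClosed_le continuous_const (hF.comp (.prodMk_left w)).norm
  have hfreq : ∃ᶠ x' in 𝓝 x, ‖F x w₀‖ / 2 ≤ ‖F x' w‖ :=
    (h.and_eventually hsphere).mono fun x' ⟨hne, hlt⟩ =>
      le_norm_of_le_norm_sphere (hd x') hr.ne' (half_pos hm) (fun w hw => (hlt w hw).le) hne w hw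
  exact norm_pos_iff.1 ((half_pos hm).trans_le (hfreq.mem_of_closed hclosed))

theorem ne_zero_of_preconnectedSpace [PreconnectedSpace X] (hF : Continuous (Function.uncurry F))
    (hd : ∀ x, Differentiable ℂ (F x)) (hr : 0 < r) (hs : ∀ x, ∀ w ∈ sphere c r, F x w ≠ 0)
    {x₀ : X} (h₀ : ∀ w ∈ closedBall c r, F x₀ w ≠ 0) (x : X) :
    ∀ w ∈ closedBall c r, F x w ≠ 0 := by
  have hopen : IsOpen {x | ∀ w ∈ closedBall c r, F x w ≠ 0} :=
    isOpen_iff_eventually.2 fun x hx =>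
      (isCompact_closedBall c r).eventually_forall_of_forall_eventually fun w hw =>
        hF.continuousAt.eventually_ne (hx w hw)
  have hclosed : IsClosed {x | ∀ w ∈ closedBall c r, F x w ≠ 0} :=
    isClosed_iff_frequently.2 fun x => ne_zero_of_frequently_ne_zero hF hd hr (hs x)
  exact Set.eq_univ_iff_forall.1 (IsClopen.eq_univ ⟨hclosed, hopen⟩ ⟨x₀, h₀⟩) x

theorem ne_zero_of_frequently_ne_zero_of_exists (hF : Continuous (Function.uncurry F))
    (hd : ∀ x, Differentiable ℂ (F x)) {x : X} (hx : ∃ w, F x w ≠ 0)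
    (h : ∀ᶠ r in 𝓝[>] (0 : ℝ), ∃ᶠ x' in 𝓝 x, ∀ w ∈ closedBall c r, F x' w ≠ 0) :
    F x c ≠ 0 := by
  have hana : AnalyticOnNhd ℂ (F x) Set.univ := fun w _ => (hd x).analyticAt w
  have hpunctured : ∀ᶠ w in 𝓝[≠] c, F x w ≠ 0 :=
    (hana c trivial).eventually_eq_zero_or_eventually_ne_zero.resolve_left fun hzero =>
      hx.elim fun w hw =>
        hw (congrFun (hana.eq_of_eventuallyEq (fun _ _ => analyticAt_const) hzero) w)
  have hball : ∀ᶠ r in 𝓝[>] (0 : ℝ), closedBall c r ⊆ {w | w ≠ c → F x w ≠ 0} :=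
    nhdsWithin_le_nhds (eventually_closedBall_subset (eventually_nhdsWithin_iff.1 hpunctured))
  obtain ⟨r, ⟨hfreq, hball⟩, hr⟩ := ((h.and hball).and self_mem_nhdsWithin).exists
  exact ne_zero_of_frequently_ne_zero hF hd hr
    (fun w hw => hball (sphere_subset_closedBall hw) (ne_of_mem_sphere hw hr.ne')) hfreq
    c (mem_closedBall_self hr.le)

end ZeroFreeFamilies

/-! ### Real-zero polynomials -/

section RealZero

open Topology Metric Filter

variable {n : ℕ} {q : MvPolynomial (Fin n) ℝ} {a b e v : Fin n → ℝ}

theorem aeval_linePoly {A : Type*} [CommRing A] [Algebra ℝ A] (q : MvPolynomial (Fin n) ℝ)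
    (a v : Fin n → ℝ) (z : A) :
    Polynomial.aeval z (linePoly q a v) =
      aeval (fun i => algebraMap ℝ A (a i) + z * algebraMap ℝ A (v i)) q := by
  rw [linePoly, ← AlgHom.comp_apply, comp_aeval]
  congr 2
  ext i
  simp [mul_comm z]

theorem eval_linePoly (q : MvPolynomial (Fin n) ℝ) (a v : Fin n → ℝ) (t : ℝ) :
    (linePoly q a v).eval t = eval (a + t • v) q :=
  aeval_linePoly q a v t

theorem aeval_ofReal (x : Fin n → ℝ) : aeval (fun i => (x i : ℂ)) q = (eval x q : ℂ) :=
  aeval_algebraMap_apply ℂ x q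

theorem aeval_ofReal_line (a v : Fin n → ℝ) (t : ℝ) :
    aeval (fun i => (a i : ℂ) + t * v i) q = (eval (a + t • v) q : ℂ) := by
  simp [← aeval_ofReal]

theorem continuous_aeval_comp {X : Type*} [TopologicalSpace X] {f : Fin n → X → ℂ}
    (hf : ∀ i, Continuous (f i)) : Continuous fun x => aeval (fun i => f i x) q := by
  simp only [aeval_def, eval₂_eq']
  fun_prop

theorem differentiable_aeval_comp {f : Fin n → ℂ → ℂ} (hf : ∀ i, Differentiable ℂ (f i)) :
    Differentiable ℂ fun z => aeval (fun i => f i z) q := by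
  simp only [aeval_def, eval₂_eq']
  fun_prop

theorem IsRealZero.im_eq_zero (hq : IsRealZero q e) {z : ℂ}
    (hz : aeval (fun i => (e i : ℂ) + z * v i) q = 0) : z.im = 0 :=
  hq.2 v z <| (aeval_linePoly q e v z).trans hz

theorem IsRealZero.exists_eval_eq_zero (hq : IsRealZero q e) {z : ℂ}
    (hz : aeval (fun i => (e i : ℂ) + z * v i) q = 0) :
    ∃ t : ℝ, z = t ∧ eval (e + t • v) q = 0 := by
  obtain ⟨t, rfl⟩ : ∃ t : ℝ, z = t := ⟨z.re, Complex.ext rfl (hq.im_eq_zero hz)⟩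
  exact ⟨t, rfl, Complex.ofReal_eq_zero.1 ((aeval_ofReal_line e v t).symm.trans hz)⟩

/-- The points that can be joined to `e` by a segment on which `q` has no zeros; for a real-zero
polynomial this is the interior of the rigidly convex set. -/
def zeroFreeRegion (q : MvPolynomial (Fin n) ℝ) (e : Fin n → ℝ) : Set (Fin n → ℝ) :=
  {b | ∀ x ∈ segment ℝ e b, eval x q ≠ 0}

theorem mem_zeroFreeRegion_iff :
    b ∈ zeroFreeRegion q e ↔ ∀ t ∈ Set.Icc (0 : ℝ) 1, eval (e + t • (b - e)) q ≠ 0 := by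
  simp only [zeroFreeRegion, Set.mem_ofPred_eq, segment_eq_image', Set.forall_mem_image]

theorem self_mem_zeroFreeRegion (he : eval e q ≠ 0) : e ∈ zeroFreeRegion q e := by
  simpa [zeroFreeRegion]

theorem eval_ne_zero_of_mem_zeroFreeRegion (hb : b ∈ zeroFreeRegion q e) : eval b q ≠ 0 :=
  hb b (right_mem_segment ℝ e b)

theorem starConvex_zeroFreeRegion (q : MvPolynomial (Fin n) ℝ) (e : Fin n → ℝ) :
    StarConvex ℝ e (zeroFreeRegion q e) :=
  starConvex_iff_segment_subset.2 fun b hb _ hx y hy =>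
    hb y ((convex_segment e b).segment_subset (left_mem_segment ℝ e b) hx hy)

theorem isOpen_zeroFreeRegion (q : MvPolynomial (Fin n) ℝ) (e : Fin n → ℝ) :
    IsOpen (zeroFreeRegion q e) := by
  have hcont : Continuous fun y : (Fin n → ℝ) × ℝ => eval (e + y.2 • (y.1 - e)) q :=
    q.continuous_eval.comp (by fun_prop)
  refine isOpen_iff_eventually.2 fun b hb => ?_
  simp only [mem_zeroFreeRegion_iff] at hb ⊢
  exact isCompact_Icc.eventually_forall_of_forall_eventually fun t ht =>
    hcont.continuousAt.eventually_ne (hb t ht)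

theorem normSq_sub_re {w : ℂ} : Complex.normSq w - w.re = ‖w - 1 / 2‖ ^ 2 - (1 / 2) ^ 2 := by
  simp only [Complex.sq_norm, Complex.normSq_apply, Complex.sub_re, Complex.sub_im,
    Complex.div_ofNat_re, Complex.div_ofNat_im, Complex.one_re, Complex.one_im]
  ring

theorem mem_sphere_half_iff {w : ℂ} :
    w ∈ sphere (1 / 2 : ℂ) (1 / 2) ↔ Complex.normSq w = w.re := by
  rw [mem_sphere_iff_norm, ← sq_eq_sq₀ (norm_nonneg _) (by norm_num), ← sub_eq_zero,
    ← normSq_sub_re, sub_eq_zero]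

theorem mem_closedBall_half_iff {w : ℂ} :
    w ∈ closedBall (1 / 2 : ℂ) (1 / 2) ↔ Complex.normSq w ≤ w.re := by
  rw [mem_closedBall_iff_norm, ← sq_le_sq₀ (norm_nonneg _) (by norm_num), ← sub_nonpos,
    ← normSq_sub_re, sub_nonpos]

theorem ofReal_mem_closedBall_half_iff {t : ℝ} :
    (t : ℂ) ∈ closedBall (1 / 2 : ℂ) (1 / 2) ↔ t ∈ Set.Icc (0 : ℝ) 1 := by
  rw [mem_closedBall_half_iff, Complex.normSq_ofReal, Complex.ofReal_re, Set.mem_Icc]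
  exact ⟨fun h => ⟨by nlinarith, by nlinarith⟩, fun h => mul_le_of_le_one_left h.1 h.2⟩

theorem IsRealZero.aeval_toward_ne_zero (hq : IsRealZero q e) (hb : b ∈ zeroFreeRegion q e)
    {w : ℂ} (hw : w ∈ closedBall (1 / 2 : ℂ) (1 / 2)) :
    aeval (fun i => (b i : ℂ) + w * (e i - b i)) q ≠ 0 := fun hzero => by
  have hline : (fun i => (b i : ℂ) + w * (e i - b i)) =
      fun i => (e i : ℂ) + (1 - w) * ((b - e) i : ℝ) := by
    ext i
    push_cast [Pi.sub_apply]
    ring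
  obtain ⟨t, ht, hzero_t⟩ := hq.exists_eval_eq_zero (hline ▸ hzero)
  obtain rfl : w = (1 - t : ℝ) := by
    rw [Complex.ofReal_sub, ← ht, Complex.ofReal_one, sub_sub_cancel]
  rw [ofReal_mem_closedBall_half_iff] at hw
  exact mem_zeroFreeRegion_iff.1 hb t ⟨by linarith [hw.2], by linarith [hw.1]⟩ hzero_t

theorem IsRealZero.aeval_toward_add_ne_zero (hq : IsRealZero q e) (hb : b ∈ zeroFreeRegion q e)
    (v : Fin n → ℝ) (β : ℝ) {w : ℂ} (hw : w ∈ closedBall (1 / 2 : ℂ) (1 / 2)) :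
    aeval (fun i => (b i : ℂ) + w * (e i - b i + β * Complex.I * v i)) q ≠ 0 := by
  refine ne_zero_of_preconnectedSpace (x₀ := 0)
    (F := fun (β : ℝ) w => aeval (fun i => (b i : ℂ) + w * (e i - b i + β * Complex.I * v i)) q)
    (continuous_aeval_comp fun i => by fun_prop)
    (fun β => differentiable_aeval_comp fun i => by fun_prop) (by norm_num)
    (fun β w hw hzero => ?_) (fun w hw => ?_) β w hw
  · rw [mem_sphere_half_iff] at hw
    rcases eq_or_ne w 0 with rfl | hw0
    · refine eval_ne_zero_of_mem_zeroFreeRegion hb ?_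
      simpa [aeval_ofReal] using hzero
    have hre : w.re ≠ 0 := hw ▸ (Complex.normSq_pos.2 hw0).ne'
    let x : ℝ := -w.im / w.re
    have hx : 1 - w = Complex.I * w * x := by
      rw [Complex.normSq_apply] at hw
      refine Complex.ext ?_ ?_
      · simp [x]
        field_simp
        linarith
      · simp [x]
        field_simp
    have hline : (fun i => (b i : ℂ) + w * (e i - b i + β * Complex.I * v i)) =
        fun i => (e i : ℂ) + Complex.I * w * ((x • (b - e) + β • v) i : ℝ) := by
      ext i
      simp only [Pi.add_apply, Pi.smul_apply, Pi.sub_apply, smul_eq_mul]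
      push_cast
      linear_combination ((b i : ℂ) - e i) * hx
    exact hre ((Complex.I_mul_im w).symm.trans (hq.im_eq_zero (hline ▸ hzero)))
  · simpa using hq.aeval_toward_ne_zero hb hw

theorem IsRealZero.of_mem_zeroFreeRegion (hq : IsRealZero q e) (hb : b ∈ zeroFreeRegion q e) :
    IsRealZero q b := by
  have hb0 : eval b q ≠ 0 := eval_ne_zero_of_mem_zeroFreeRegion hb
  refine ⟨hb0, fun v z₀ hz₀ => by_contra fun him => ?_⟩
  let F (s : ℝ) (z : ℂ) : ℂ :=
    aeval (fun i => (b i : ℂ) + z * (v i - s * z₀.im * Complex.I * (e i - b i))) q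
  have hF0 : F 0 z₀ = 0 := by simpa [F, aeval_linePoly] using hz₀
  have hFs {s : ℝ} (hs : 0 < s) {z : ℂ} (hz : s * z₀.im ^ 2 * Complex.normSq z < z₀.im * z.im) :
      F s z ≠ 0 := by
    have hw : -(s * z₀.im * Complex.I * z) ∈ closedBall (1 / 2 : ℂ) (1 / 2) := by
      rw [mem_closedBall_half_iff]
      simp only [Complex.normSq_neg, map_mul, Complex.normSq_ofReal, Complex.normSq_I,
        Complex.neg_re, Complex.mul_re, Complex.mul_im, Complex.ofReal_re, Complex.ofReal_im,
        Complex.I_re, Complex.I_im]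
      nlinarith [mul_le_mul_of_nonneg_left hz.le hs.le]
    convert hq.aeval_toward_add_ne_zero hb v (s * z₀.im)⁻¹ hw using 5 with i
    have hs0 : (s : ℂ) ≠ 0 := mod_cast hs.ne'
    have him0 : (z₀.im : ℂ) ≠ 0 := mod_cast him
    push_cast
    field_simp
    linear_combination z * v i * Complex.I_sq
  refine ne_zero_of_frequently_ne_zero_of_exists (x := 0) (F := F) (c := z₀)
    (continuous_aeval_comp fun i => by fun_prop)
    (fun s => differentiable_aeval_comp fun i => by fun_prop)
    ⟨0, by simpa [F, aeval_ofReal] using hb0⟩ ?_ hF0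
  have hnhds : ∀ᶠ z in 𝓝 z₀, 0 < z₀.im * z.im :=
    (continuous_const.mul Complex.continuous_im).continuousAt.eventually_const_lt
      (mul_self_pos.2 him)
  filter_upwards [nhdsWithin_le_nhds (eventually_closedBall_subset hnhds)] with r hr
  have hev : ∀ᶠ s in 𝓝 (0 : ℝ), ∀ z ∈ closedBall z₀ r,
      s * z₀.im ^ 2 * Complex.normSq z < z₀.im * z.im :=
    (isCompact_closedBall z₀ r).eventually_forall_of_forall_eventually fun z hz =>
      ContinuousAt.eventually_lt (by fun_prop) (by fun_prop) (by simpa using hr hz)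
  have hpos : ∀ᶠ s in 𝓝[>] (0 : ℝ), ∀ z ∈ closedBall z₀ r, F s z ≠ 0 := by
    filter_upwards [nhdsWithin_le_nhds hev, self_mem_nhdsWithin] with s hlt hs z hz
    exact hFs hs (hlt z hz)
  exact hpos.frequently.filter_mono nhdsWithin_le_nhds

theorem IsRealZero.mem_zeroFreeRegion_of_mem (hq : IsRealZero q e) {c : Fin n → ℝ}
    (hb : b ∈ zeroFreeRegion q e) (hc : c ∈ zeroFreeRegion q e) : c ∈ zeroFreeRegion q b := by
  have hself : e ∈ zeroFreeRegion q e := self_mem_zeroFreeRegion hq.1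
  have : PreconnectedSpace (zeroFreeRegion q e) := Subtype.preconnectedSpace
    ((starConvex_zeroFreeRegion q e).isPathConnected hself).isConnected.isPreconnected
  have hcoord (i : Fin n) : Continuous fun x : zeroFreeRegion q e × ℂ => (x.1.1 i : ℂ) :=
    Complex.continuous_ofReal.comp
      ((continuous_apply i).comp (continuous_subtype_val.comp continuous_fst))
  refine mem_zeroFreeRegion_iff.2 fun t ht hzero => ?_
  refine ne_zero_of_preconnectedSpace (X := zeroFreeRegion q e) (x₀ := ⟨e, hself⟩)
    (F := fun x w => aeval (fun i => (b i : ℂ) + w * (x.1 i - b i)) q)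
    (continuous_aeval_comp fun i =>
      continuous_const.add (continuous_snd.mul ((hcoord i).sub continuous_const)))
    (fun x => differentiable_aeval_comp fun i => by fun_prop) (c := 1 / 2) (r := 1 / 2)
    (by norm_num) (fun x w hw hzero => ?_) (fun w hw => hq.aeval_toward_ne_zero hb hw)
    ⟨c, hc⟩ t (ofReal_mem_closedBall_half_iff.2 ht) ?_
  · obtain ⟨s, rfl, hs⟩ := (hq.of_mem_zeroFreeRegion hb).exists_eval_eq_zero
      (v := x.1 - b) (z := w) (by simpa using hzero)
    rw [mem_sphere_half_iff, Complex.normSq_ofReal, Complex.ofReal_re] at hw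
    rcases mul_left_eq_self₀.1 hw with rfl | rfl
    · exact eval_ne_zero_of_mem_zeroFreeRegion x.2 (by simpa using hs)
    · exact eval_ne_zero_of_mem_zeroFreeRegion hb (by simpa using hs)
  · simpa [hzero] using aeval_ofReal_line (q := q) b (c - b) t

theorem IsRealZero.convex_zeroFreeRegion (hq : IsRealZero q e) :
    Convex ℝ (zeroFreeRegion q e) := by
  have hstar := starConvex_zeroFreeRegion q e
  refine convex_iff_segment_subset.2 fun b hb c hc y hy => ?_
  rw [segment_eq_image'] at hy
  obtain ⟨t, ht, rfl⟩ := hy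
  refine mem_zeroFreeRegion_iff.2 fun u hu => ?_
  convert mem_zeroFreeRegion_iff.1 (hq.mem_zeroFreeRegion_of_mem
    (hstar.add_smul_sub_mem hb hu.1 hu.2) (hstar.add_smul_sub_mem hc hu.1 hu.2)) t ht using 3
  module

end RealZero

/-! ### Laguerre's inequality -/

section Laguerre

open Topology Filter

theorem RealRooted.splits {φ : Polynomial ℝ} (h : RealRooted φ) : φ.Splits := by
  refine .of_splits_map (algebraMap ℝ ℂ) (IsAlgClosed.splits _) fun z hz => ⟨z.re, ?_⟩
  have hroot : Polynomial.aeval z φ = 0 := by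
    rw [Polynomial.aeval_def, ← Polynomial.eval_map]
    exact Polynomial.isRoot_of_mem_roots hz
  exact Complex.ext rfl (h z hroot).symm

/-- The Laguerre expression `φ'² - φ φ''` of a polynomial. -/
noncomputable def laguerre {R : Type*} [CommRing R] (φ : Polynomial R) : Polynomial R :=
  φ.derivative ^ 2 - φ * φ.derivative.derivative

theorem laguerre_mul {R : Type*} [CommRing R] (φ ψ : Polynomial R) :
    laguerre (φ * ψ) = φ ^ 2 * laguerre ψ + ψ ^ 2 * laguerre φ := by
  simp only [laguerre, Polynomial.derivative_mul, Polynomial.derivative_add]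
  ring

theorem eval_laguerre_nonneg {φ : Polynomial ℝ} (hφ : φ.Splits) (x : ℝ) :
    0 ≤ (laguerre φ).eval x := by
  induction hφ using Submonoid.closure_induction with
  | mem φ hφ => rcases hφ with ⟨a, rfl⟩ | ⟨a, rfl⟩ <;> simp [laguerre]
  | one => simp [laguerre]
  | mul φ ψ _ _ hφ hψ =>
    rw [laguerre_mul, Polynomial.eval_add, Polynomial.eval_mul, Polynomial.eval_mul,
      Polynomial.eval_pow, Polynomial.eval_pow]
    positivity

theorem abs_eval_le_of_laguerre_le {φ : Polynomial ℝ} (hφ : φ.Splits) {M : ℝ}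
    (hM : 0 ≤ M) (h0 : φ.eval 0 ≠ 0) (h : (laguerre φ).eval 0 ≤ M ^ 2 * φ.eval 0 ^ 2) (s : ℝ) :
    |φ.eval s| ≤ |φ.eval 0| * (1 + |s| * M) ^ φ.natDegree := by
  induction hφ using Submonoid.closure_induction with
  | mem φ hφ =>
    rcases hφ with ⟨a, rfl⟩ | ⟨a, rfl⟩
    · simp
    · have hMa : 1 ≤ M * |a| :=
        (one_le_sq_iff₀ (by positivity)).1 (by simpa [laguerre, mul_pow] using h)
      have hs : |s| ≤ |s| * (M * |a|) := le_mul_of_one_le_right (abs_nonneg s) hMa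
      simp only [Polynomial.eval_add, Polynomial.eval_X, Polynomial.eval_C, zero_add,
        Polynomial.natDegree_X_add_C, pow_one]
      linarith [abs_add_le s a]
  | one => simp
  | mul φ ψ hφ hψ ihφ ihψ =>
    have hLφ := eval_laguerre_nonneg hφ 0
    have hLψ := eval_laguerre_nonneg hψ 0
    rw [laguerre_mul] at h
    simp only [Polynomial.eval_add, Polynomial.eval_mul, Polynomial.eval_pow] at h h0 ⊢
    obtain ⟨hφ0, hψ0⟩ := mul_ne_zero_iff.1 h0
    have hφ2 : 0 < φ.eval 0 ^ 2 := by positivity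
    have hψ2 : 0 < ψ.eval 0 ^ 2 := by positivity
    rw [abs_mul, abs_mul, Polynomial.natDegree_mul (by rintro rfl; simp at hφ0)
      (by rintro rfl; simp at hψ0), pow_add, mul_mul_mul_comm]
    refine mul_le_mul (ihφ hφ0 (le_of_mul_le_mul_left ?_ hψ2))
      (ihψ hψ0 (le_of_mul_le_mul_left ?_ hφ2)) (abs_nonneg _) (by positivity)
    · linarith [mul_nonneg hφ2.le hLψ]
    · linarith [mul_nonneg hψ2.le hLφ]

theorem exists_eventually_sq_sub_mul_le {f₀ f₁ f₂ : ℝ → ℝ} {c : ℝ} (hf₀ : HasDerivAt f₀ c 0)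
    (hf₁ : DifferentiableAt ℝ f₁ 0) (hf₂ : DifferentiableAt ℝ f₂ 0) (hc : 0 < c) (h₀ : f₀ 0 = 0)
    (h₁ : f₁ 0 = 0) (h₂ : 0 ≤ f₂ 0) :
    ∃ M, 0 ≤ M ∧ ∀ᶠ δ in 𝓝[>] 0, f₁ δ ^ 2 - f₀ δ * f₂ δ ≤ M ^ 2 * f₀ δ ^ 2 := by
  obtain ⟨K₁, hK₁⟩ := hf₁.isBigO_sub.bound
  obtain ⟨K₂, hK₂⟩ := hf₂.isBigO_sub.bound
  have hslope : ∀ᶠ δ in 𝓝[>] (0 : ℝ), c / 2 < δ⁻¹ * f₀ δ := by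
    have := (hasDerivAt_iff_tendsto_slope_zero.1 hf₀).mono_left (nhdsGT_le_nhdsNE 0)
    simpa [h₀] using this.eventually_const_lt (half_lt_self hc)
  let K := max (max K₁ K₂) 0 * (2 / c)
  have hK : 0 ≤ K := by positivity
  refine ⟨K + 1, by positivity, ?_⟩
  filter_upwards [hslope, nhdsWithin_le_nhds hK₁, nhdsWithin_le_nhds hK₂, self_mem_nhdsWithin]
    with δ hslope hδ₁ hδ₂ (hδ : 0 < δ)
  rw [lt_inv_mul_iff₀ hδ] at hslope
  have hf₀δ : 0 < f₀ δ := lt_trans (by positivity) hslope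
  have hδle : δ ≤ 2 / c * f₀ δ := by
    rw [div_mul_eq_mul_div, le_div_iff₀ hc]
    linarith
  have hle {k : ℝ} (hk : k ≤ max (max K₁ K₂) 0) : k * δ ≤ K * f₀ δ := by
    rw [mul_assoc]
    exact mul_le_mul hk hδle hδ.le (le_max_right _ _)
  simp only [h₁, sub_zero, Real.norm_eq_abs, abs_of_pos hδ] at hδ₁ hδ₂
  have hf₁δ : |f₁ δ| ≤ K * f₀ δ :=
    hδ₁.trans (hle ((le_max_left _ _).trans (le_max_left _ _)))
  have hf₂δ : -(K * f₀ δ) ≤ f₂ δ := by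
    linarith [neg_abs_le (f₂ δ - f₂ 0), hle ((le_max_right K₁ K₂).trans (le_max_left _ _))]
  have hsq : f₁ δ ^ 2 ≤ (K * f₀ δ) ^ 2 := sq_le_sq' (abs_le.1 hf₁δ).1 (abs_le.1 hf₁δ).2
  nlinarith [mul_le_mul_of_nonneg_left hf₂δ hf₀δ.le, mul_nonneg hK (sq_nonneg (f₀ δ))]

end Laguerre

/-! ### Curvature of the boundary -/

section BoundaryCurvature

open Topology Filter

variable {n : ℕ} {q : MvPolynomial (Fin n) ℝ} {a e : Fin n → ℝ}

theorem eval_dirDeriv (v : Fin n → ℝ) (q : MvPolynomial (Fin n) ℝ) (a : Fin n → ℝ) :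
    eval a (dirDeriv v q) = ∑ i, v i * eval a (pderiv i q) := by
  simp [dirDeriv, smul_eval]

theorem eval_dirDeriv_dirDeriv (v : Fin n → ℝ) (q : MvPolynomial (Fin n) ℝ) (a : Fin n → ℝ) :
    eval a (dirDeriv v (dirDeriv v q)) =
      ∑ i, ∑ j, v i * v j * eval a (pderiv i (pderiv j q)) := by
  simp [dirDeriv, smul_eval, Finset.mul_sum, mul_assoc]

theorem derivative_linePoly (q : MvPolynomial (Fin n) ℝ) (a v : Fin n → ℝ) :
    (linePoly q a v).derivative = linePoly (dirDeriv v q) a v := by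
  unfold linePoly
  induction q using MvPolynomial.induction_on with
  | C c => simp [dirDeriv]
  | add p q hp hq => simp_all [dirDeriv, Finset.sum_add_distrib]
  | mul_X p k hp =>
    have hmul : dirDeriv v (p * X k) = X k * dirDeriv v p + v k • p := by
      simp [dirDeriv, Derivation.leibniz, Finset.sum_add_distrib, Finset.mul_sum, Pi.single_apply,
        add_comm]
    simp only [hmul, smul_eq_C_mul, map_add, map_mul, aeval_X, algHom_C, Polynomial.algebraMap_eq,
      Polynomial.derivative_mul, Polynomial.derivative_C, Polynomial.derivative_X, hp, zero_mul,
      mul_one, zero_add]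
    ring

theorem natDegree_linePoly_le (q : MvPolynomial (Fin n) ℝ) (a v : Fin n → ℝ) :
    (linePoly q a v).natDegree ≤ q.totalDegree :=
  (aeval_natDegree_le (n := 1) q le_rfl _ fun i => by compute_degree).trans_eq (mul_one _)

theorem hasDerivAt_eval_line (q : MvPolynomial (Fin n) ℝ) (a v : Fin n → ℝ) (t : ℝ) :
    HasDerivAt (fun t : ℝ => eval (a + t • v) q) (eval (a + t • v) (dirDeriv v q)) t := by
  simpa only [derivative_linePoly, eval_linePoly] using (linePoly q a v).hasDerivAt t

theorem IsRealZero.abs_eval_le (hq : IsRealZero q e) (v : Fin n → ℝ) {M : ℝ} (hM : 0 ≤ M)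
    (h : eval e (dirDeriv v q) ^ 2 - eval e q * eval e (dirDeriv v (dirDeriv v q)) ≤
      M ^ 2 * eval e q ^ 2) (s : ℝ) :
    |eval (e + s • v) q| ≤ |eval e q| * (1 + |s| * M) ^ q.totalDegree := by
  have hzero (r : MvPolynomial (Fin n) ℝ) : (linePoly r e v).eval 0 = eval e r := by
    simp [eval_linePoly]
  have hgrowth := abs_eval_le_of_laguerre_le (hq.2 v).splits hM (by simpa [hzero] using hq.1)
    (by simpa [laguerre, derivative_linePoly, hzero] using h) s
  rw [hzero, eval_linePoly] at hgrowth
  refine hgrowth.trans ?_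
  gcongr
  · exact le_add_of_nonneg_right (by positivity)
  · exact natDegree_linePoly_le q e v

/-- If the second derivative of `q` along `v` were nonnegative at `a`, Laguerre's inequality along
the lines parallel to `v` through the real-zero points `a + δ (e - a)` would force `q` to vanish on
`a + ℝ v`, in the limit `δ → 0`. -/
theorem strictQuasiConcaveAt_of_isRealZero
    (hrz : ∀ δ ∈ Set.Ioc (0 : ℝ) 1, IsRealZero q (a + δ • (e - a))) (ha : eval a q = 0)
    (hpos : 0 < eval a (dirDeriv (e - a) q))
    (hline : ∀ v : Fin n → ℝ, v ≠ 0 → ∃ t : ℝ, eval (a + t • v) q ≠ 0) :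
    StrictQuasiConcaveAt q a := by
  intro v hv hgrad
  rw [← eval_dirDeriv] at hgrad
  rw [← eval_dirDeriv_dirDeriv]
  by_contra! hnonneg
  obtain ⟨s, hs⟩ := hline v hv
  let f (r : MvPolynomial (Fin n) ℝ) (δ : ℝ) : ℝ := eval (a + δ • (e - a)) r
  have hf0 (r : MvPolynomial (Fin n) ℝ) : f r 0 = eval a r := by simp [f]
  have hf (r : MvPolynomial (Fin n) ℝ) : HasDerivAt (f r) (eval a (dirDeriv (e - a) r)) 0 :=
    hf0 (dirDeriv (e - a) r) ▸ hasDerivAt_eval_line r a (e - a) 0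
  obtain ⟨M, hM, hle⟩ := exists_eventually_sq_sub_mul_le (hf q) (hf (dirDeriv v q)).differentiableAt
    (hf (dirDeriv v (dirDeriv v q))).differentiableAt hpos (by rw [hf0, ha]) (by rw [hf0, hgrad])
    (by rwa [hf0])
  have hgrowth : ∀ᶠ δ in 𝓝[>] (0 : ℝ), |eval (a + δ • (e - a) + s • v) q| ≤
      |f q δ| * (1 + |s| * M) ^ q.totalDegree := by
    filter_upwards [hle, Ioc_mem_nhdsGT one_pos] with δ hδ hδ1
    exact (hrz δ hδ1).abs_eval_le v hM hδ s
  have hleft : Tendsto (fun δ : ℝ => |eval (a + δ • (e - a) + s • v) q|) (𝓝[>] 0)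
      (𝓝 |eval (a + s • v) q|) := by
    have hpath : Continuous fun δ : ℝ => a + δ • (e - a) + s • v := by fun_prop
    simpa using (q.continuous_eval.comp hpath).abs.continuousWithinAt.tendsto (x := 0)
  have hright : Tendsto (fun δ => |f q δ| * (1 + |s| * M) ^ q.totalDegree) (𝓝[>] 0) (𝓝 0) := by
    simpa [hf0, ha] using ((hf q).continuousAt.tendsto.mono_left nhdsWithin_le_nhds).abs.mul_const
      ((1 + |s| * M) ^ q.totalDegree)
  exact hs (abs_nonpos_iff.1 (le_of_tendsto_of_tendsto hleft hright hgrowth))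

end BoundaryCurvature

/-! ### Rigidly convex sets -/

section RigidlyConvexSet

open Topology Metric Filter

variable {n : ℕ} {q : MvPolynomial (Fin n) ℝ} {a b e : Fin n → ℝ}

theorem mem_rigidSet_iff :
    a ∈ rigidSet q e ↔ ∀ t ∈ Set.Ico (0 : ℝ) 1, eval (e + t • (a - e)) q ≠ 0 := by
  simp only [rigidSet, Set.mem_ofPred_eq, Polynomial.IsRoot, eval_linePoly, Set.mem_Ico, and_imp,
    ne_eq]

theorem rigidSet_mul (g h : MvPolynomial (Fin n) ℝ) (e : Fin n → ℝ) :
    rigidSet (g * h) e = rigidSet g e ∩ rigidSet h e := by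
  ext a
  simp only [Set.mem_inter_iff, mem_rigidSet_iff, map_mul, mul_ne_zero_iff, forall_and]

theorem rigidSet_neg (q : MvPolynomial (Fin n) ℝ) (e : Fin n → ℝ) :
    rigidSet (-q) e = rigidSet q e := by
  ext a
  simp only [mem_rigidSet_iff, map_neg, neg_ne_zero]

theorem IsRealZero.of_dvd {p : MvPolynomial (Fin n) ℝ} (hp : IsRealZero p e) (hqp : q ∣ p) :
    IsRealZero q e := by
  obtain ⟨r, rfl⟩ := hqp
  refine ⟨left_ne_zero_of_mul (map_mul (eval e) q r ▸ hp.1), fun v z hz => hp.2 v z ?_⟩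
  rw [linePoly, map_mul, map_mul, ← linePoly, hz, zero_mul]

theorem mem_zeroFreeRegion_of_mem_rigidSet (ha : a ∈ rigidSet q e) (h0 : eval a q ≠ 0) :
    a ∈ zeroFreeRegion q e := by
  refine mem_zeroFreeRegion_iff.2 fun t ht => ?_
  rcases ht.2.lt_or_eq with hlt | rfl
  · exact mem_rigidSet_iff.1 ha t ⟨ht.1, hlt⟩
  · simpa using h0

theorem zeroFreeRegion_subset_rigidSet : zeroFreeRegion q e ⊆ rigidSet q e := fun _ ha =>
  mem_rigidSet_iff.2 fun t ht => mem_zeroFreeRegion_iff.1 ha t (Set.Ico_subset_Icc_self ht)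

theorem mem_rigidSet_iff_forall_mem_zeroFreeRegion :
    a ∈ rigidSet q e ↔ ∀ t ∈ Set.Ico (0 : ℝ) 1, e + t • (a - e) ∈ zeroFreeRegion q e := by
  refine ⟨fun ha t ht => mem_zeroFreeRegion_iff.2 fun s hs => ?_, fun ha =>
    mem_rigidSet_iff.2 fun t ht => eval_ne_zero_of_mem_zeroFreeRegion (ha t ht)⟩
  rw [add_sub_cancel_left, smul_smul]
  exact mem_rigidSet_iff.1 ha (s * t)
    ⟨mul_nonneg hs.1 ht.1, (mul_le_of_le_one_left ht.1 hs.2).trans_lt ht.2⟩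

theorem rigidSet_subset_closure_zeroFreeRegion :
    rigidSet q e ⊆ closure (zeroFreeRegion q e) := fun a ha => by
  have hpath : Continuous fun t : ℝ => e + t • (a - e) := by fun_prop
  refine mem_closure_of_tendsto (b := 𝓝[<] 1) (f := fun t : ℝ => e + t • (a - e)) ?_ ?_
  · simpa using hpath.continuousWithinAt.tendsto (x := 1)
  · filter_upwards [Ico_mem_nhdsLT one_pos] with t ht
    exact mem_rigidSet_iff_forall_mem_zeroFreeRegion.1 ha t ht

theorem IsRealZero.convex_rigidSet (hq : IsRealZero q e) : Convex ℝ (rigidSet q e) := by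
  intro a ha b hb s t hs ht hst
  rw [mem_rigidSet_iff_forall_mem_zeroFreeRegion] at ha hb ⊢
  intro u hu
  convert hq.convex_zeroFreeRegion (ha u hu) (hb u hu) hs ht hst using 1
  obtain rfl := eq_sub_of_add_eq hst
  module

theorem IsRealZero.add_smul_sub_mem_zeroFreeRegion (hq : IsRealZero q e) (ha : a ∈ rigidSet q e)
    (hb : b ∈ zeroFreeRegion q e) {t : ℝ} (ht : t ∈ Set.Ioc (0 : ℝ) 1) :
    a + t • (b - a) ∈ zeroFreeRegion q e := by
  have hopen := (isOpen_zeroFreeRegion q e).interior_eq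
  have hmem := hq.convex_zeroFreeRegion.add_smul_sub_mem_interior'
    (rigidSet_subset_closure_zeroFreeRegion ha) (hopen.symm ▸ hb) ht
  rwa [hopen] at hmem

theorem eval_pos_of_mem_zeroFreeRegion (he : 0 < eval e q) (hb : b ∈ zeroFreeRegion q e) :
    0 < eval b q := by
  by_contra! hle
  obtain ⟨x, hx, hx0⟩ := (convex_segment e b).isPreconnected.intermediate_value
    (right_mem_segment ℝ e b) (left_mem_segment ℝ e b) q.continuous_eval.continuousOn
    ⟨hle, he.le⟩
  exact hb x hx hx0

theorem eval_nonneg_of_mem_rigidSet (he : 0 < eval e q) (hb : b ∈ rigidSet q e) :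
    0 ≤ eval b q :=
  closure_minimal (t := {x | 0 ≤ eval x q}) (fun _ hx => (eval_pos_of_mem_zeroFreeRegion he hx).le)
    (isClosed_le continuous_const q.continuous_eval) (rigidSet_subset_closure_zeroFreeRegion hb)

theorem IsRealZero.eval_dirDeriv_sub_nonneg (hq : IsRealZero q e) (he : 0 < eval e q)
    (ha : a ∈ rigidSet q e) (h0 : eval a q = 0) (hb : b ∈ zeroFreeRegion q e) :
    0 ≤ eval a (dirDeriv (b - a) q) := by
  have hderiv := (hasDerivAt_eval_line q a (b - a) 0).tendsto_slope_zero_right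
  simp only [zero_smul, add_zero, zero_add, h0, sub_zero] at hderiv
  refine ge_of_tendsto hderiv ?_
  filter_upwards [Ioc_mem_nhdsGT one_pos] with t ht
  exact smul_nonneg (inv_nonneg.2 ht.1.le)
    (eval_pos_of_mem_zeroFreeRegion he (hq.add_smul_sub_mem_zeroFreeRegion ha hb ht)).le

theorem IsRealZero.eval_dirDeriv_sub_pos (hq : IsRealZero q e) (he : 0 < eval e q)
    (ha : a ∈ rigidSet q e) (h0 : eval a q = 0) (hgrad : (fun i => eval a (pderiv i q)) ≠ 0) :
    0 < eval a (dirDeriv (e - a) q) := by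
  let g : Fin n → ℝ := fun i => eval a (pderiv i q)
  have hpath : Continuous fun t : ℝ => e - t • g := by fun_prop
  have hnear : ∀ᶠ t in 𝓝[>] (0 : ℝ), e - t • g ∈ zeroFreeRegion q e :=
    nhdsWithin_le_nhds <| hpath.continuousAt.eventually_mem <|
      (isOpen_zeroFreeRegion q e).mem_nhds <| by simpa using self_mem_zeroFreeRegion he.ne'
  obtain ⟨t, hmem, ht⟩ := (hnear.and self_mem_nhdsWithin).exists
  calc 0 < t * (g ⬝ᵥ g) := mul_pos ht (by simpa using Matrix.dotProduct_star_self_pos_iff.2 hgrad)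
    _ ≤ t * (g ⬝ᵥ g) + eval a (dirDeriv (e - t • g - a) q) :=
      le_add_of_nonneg_right (hq.eval_dirDeriv_sub_nonneg he ha h0 hmem)
    _ = eval a (dirDeriv (e - a) q) := by
      simp only [eval_dirDeriv, dotProduct, Finset.mul_sum, ← Finset.sum_add_distrib]
      refine Finset.sum_congr rfl fun i _ => ?_
      simp only [Pi.sub_apply, Pi.smul_apply, smul_eq_mul, g]
      ring

theorem eventually_eval_lt_eval_add_smul_sub (hpos : 0 < eval a (dirDeriv (e - a) q)) :
    ∀ᶠ z : (Fin n → ℝ) × ℝ in 𝓝 (a, 0),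
      0 < z.2 → eval z.1 q < eval (z.1 + z.2 • (e - z.1)) q := by
  have hcont : Continuous fun z : (Fin n → ℝ) × ℝ =>
      eval (z.1 + z.2 • (e - z.1)) (dirDeriv (e - z.1) q) := by
    simp only [eval_dirDeriv]
    refine continuous_finsetSum _ fun i _ => ?_
    refine Continuous.mul (by simp only [Pi.sub_apply]; fun_prop) ?_
    exact (pderiv i q).continuous_eval.comp (by fun_prop)
  obtain ⟨r, hr, hderiv⟩ := Metric.isOpen_iff.1 (isOpen_Ioi.preimage hcont) (a, 0)
    (by simpa using hpos)
  rw [← ball_prod_same] at hderiv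
  refine Metric.eventually_nhds_iff_ball.2 ⟨r, hr, fun ⟨x, s⟩ hxs hs => ?_⟩
  rw [← ball_prod_same] at hxs
  have hline (t : ℝ) := hasDerivAt_eval_line q x (e - x) t
  have hmono : StrictMonoOn (fun t : ℝ => eval (x + t • (e - x)) q) (Set.Icc 0 s) := by
    refine strictMonoOn_of_deriv_pos (convex_Icc 0 s)
      (fun t _ => (hline t).continuousAt.continuousWithinAt) fun t ht => ?_
    rw [(hline t).deriv]
    rw [interior_Icc] at ht
    exact hderiv (a := (x, t)) ⟨hxs.1, (convex_ball (0 : ℝ) r).ordConnected.out (mem_ball_self hr)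
      hxs.2 (Set.Ioo_subset_Icc_self ht)⟩
  simpa using hmono (Set.left_mem_Icc.2 hs.le) (Set.right_mem_Icc.2 hs.le) hs

theorem IsRealZero.eventually_mem_rigidSet (hq : IsRealZero q e) (ha : a ∈ rigidSet q e)
    (hpos : 0 < eval a (dirDeriv (e - a) q)) :
    ∀ᶠ x in 𝓝 a, 0 ≤ eval x q → x ∈ rigidSet q e := by
  have hcont : Continuous fun z : (Fin n → ℝ) × ℝ => eval (z.1 + z.2 • (e - z.1)) q :=
    q.continuous_eval.comp (by fun_prop)
  have hsegment : ∀ᶠ x in 𝓝 a, ∀ s ∈ Set.Icc (0 : ℝ) 1,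
      0 ≤ eval x q → 0 < s → eval (x + s • (e - x)) q ≠ 0 := by
    refine isCompact_Icc.eventually_forall_of_forall_eventually fun s hs => ?_
    rcases hs.1.eq_or_lt with rfl | hs0
    · filter_upwards [eventually_eval_lt_eval_add_smul_sub hpos] with z hlt hz hz0
      exact (hz.trans_lt (hlt hz0)).ne'
    · filter_upwards [hcont.continuousAt.eventually_ne (eval_ne_zero_of_mem_zeroFreeRegion <|
        hq.add_smul_sub_mem_zeroFreeRegion ha (self_mem_zeroFreeRegion hq.1) ⟨hs0, hs.2⟩)]
        with z hz _ _ using hz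
  filter_upwards [hsegment] with x hx hx0
  refine mem_rigidSet_iff.2 fun t ht => ?_
  convert hx (1 - t) ⟨by linarith [ht.2], by linarith [ht.1]⟩ hx0 (by linarith [ht.2]) using 3
  module

theorem eventually_isShadow_inter_closedBall {S : Set (Fin n → ℝ)} (hS : S ∈ 𝓝 a) :
    ∀ᶠ ε in 𝓝[>] (0 : ℝ), IsShadow (S ∩ closedBall a ε) := by
  filter_upwards [nhdsWithin_le_nhds (eventually_closedBall_subset hS), self_mem_nhdsWithin]
    with ε hball hε
  rw [Set.inter_eq_right.2 hball]
  exact isShadow_closedBall a (le_of_lt hε)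

theorem eventually_isShadow_of_eval_ne_zero (ha : a ∈ rigidSet q e) (h0 : eval a q ≠ 0) :
    ∀ᶠ ε in 𝓝[>] (0 : ℝ), IsShadow (rigidSet q e ∩ closedBall a ε) :=
  eventually_isShadow_inter_closedBall <| mem_of_superset ((isOpen_zeroFreeRegion q e).mem_nhds
    (mem_zeroFreeRegion_of_mem_rigidSet ha h0)) zeroFreeRegion_subset_rigidSet

theorem IsRealZero.eventually_isShadow_of_pos (hq : IsRealZero q e) (he : 0 < eval e q)
    (ha : a ∈ rigidSet q e) (h0 : eval a q = 0) (hgrad : (fun i => eval a (pderiv i q)) ≠ 0)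
    (hline : ∀ v : Fin n → ℝ, v ≠ 0 → ∃ t : ℝ, eval (a + t • v) q ≠ 0) :
    ∀ᶠ ε in 𝓝[>] (0 : ℝ), IsShadow (rigidSet q e ∩ closedBall a ε) := by
  have hpos := hq.eval_dirDeriv_sub_pos he ha h0 hgrad
  have hconc : StrictQuasiConcaveAt q a := strictQuasiConcaveAt_of_isRealZero (fun δ hδ =>
    hq.of_mem_zeroFreeRegion <|
      hq.add_smul_sub_mem_zeroFreeRegion ha (self_mem_zeroFreeRegion hq.1) hδ) h0 hpos hline
  filter_upwards [hconc.eventually_isShadow h0,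
    nhdsWithin_le_nhds (eventually_closedBall_subset (hq.eventually_mem_rigidSet ha hpos))]
    with ε hshadow hball
  convert hshadow using 1
  exact Set.ext fun x => and_congr_left fun hx =>
    ⟨eval_nonneg_of_mem_rigidSet he, hball hx⟩

theorem IsRealZero.eventually_isShadow_of_eval_eq_zero (hq : IsRealZero q e)
    (ha : a ∈ rigidSet q e) (h0 : eval a q = 0) (hgrad : (fun i => eval a (pderiv i q)) ≠ 0)
    (hline : ∀ v : Fin n → ℝ, v ≠ 0 → ∃ t : ℝ, eval (a + t • v) q ≠ 0) :
    ∀ᶠ ε in 𝓝[>] (0 : ℝ), IsShadow (rigidSet q e ∩ closedBall a ε) := by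
  rcases hq.1.lt_or_gt with he | he
  · rw [← rigidSet_neg] at ha ⊢
    refine (hq.of_dvd (neg_dvd.2 dvd_rfl)).eventually_isShadow_of_pos (by simpa using he) ha
      (by simpa using h0) ?_ (by simpa using hline)
    simpa [funext_iff] using hgrad
  · exact hq.eventually_isShadow_of_pos he ha h0 hgrad hline

theorem IsRealZero.eventually_isShadow (hq : IsRealZero q e) (ha : a ∈ rigidSet q e)
    (hfactor : ∀ g : MvPolynomial (Fin n) ℝ, Irreducible g → g ∣ q → eval a g = 0 →
      (fun i => eval a (pderiv i g)) ≠ 0 ∧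
        ∀ v : Fin n → ℝ, v ≠ 0 → ∃ t : ℝ, eval (a + t • v) g ≠ 0) :
    ∀ᶠ ε in 𝓝[>] (0 : ℝ), IsShadow (rigidSet q e ∩ closedBall a ε) := by
  induction q using WfDvdMonoid.induction_on_irreducible with
  | zero => exact absurd (map_zero (eval e)) hq.1
  | unit u hu => exact eventually_isShadow_of_eval_ne_zero ha (hu.map (eval a)).ne_zero
  | mul q g _ hg ih =>
    have hgq : g ∣ g * q := dvd_mul_right g q
    have hqq : q ∣ g * q := dvd_mul_left q g
    rw [rigidSet_mul] at ha ⊢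
    have hleft : ∀ᶠ ε in 𝓝[>] (0 : ℝ), IsShadow (rigidSet g e ∩ closedBall a ε) := by
      by_cases h0 : eval a g = 0
      · obtain ⟨hgrad, hline⟩ := hfactor g hg hgq h0
        exact (hq.of_dvd hgq).eventually_isShadow_of_eval_eq_zero ha.1 h0 hgrad hline
      · exact eventually_isShadow_of_eval_ne_zero ha.1 h0
    have hright := ih (hq.of_dvd hqq) ha.2 fun r hr hrq => hfactor r hr (hrq.trans hqq)
    filter_upwards [hleft, hright] with ε hl hr
    rw [Set.inter_inter_distrib_right]
    exact hl.inter hr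

end RigidlyConvexSet

/-- If `p` is real-zero with respect to `e` with compact rigidly convex
set `S_e(p)`, and for every boundary point `a` of `S_e(p)` every irreducible factor of `p`
vanishing at `a` has `a` as a smooth point and does not vanish identically on any full
affine line through `a`, then `S_e(p)` is a spectrahedral shadow. -/
theorem rigidly_convex_set_is_spectrahedral_shadow
    {n : ℕ} (p : MvPolynomial (Fin n) ℝ) (e : Fin n → ℝ)
    (hrz : IsRealZero p e) (hcomp : IsCompact (rigidSet p e))
    (hbd : ∀ a ∈ frontier (rigidSet p e),
      ∀ q : MvPolynomial (Fin n) ℝ, Irreducible q → q ∣ p → MvPolynomial.eval a q = 0 →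
        ((fun i => MvPolynomial.eval a (MvPolynomial.pderiv i q)) ≠ 0 ∧
          ∀ v : Fin n → ℝ, v ≠ 0 → ∃ t : ℝ, MvPolynomial.eval (a + t • v) q ≠ 0)) :
    IsSpectrahedralShadow (rigidSet p e) := by
  have he : e ∈ rigidSet p e := zeroFreeRegion_subset_rigidSet (self_mem_zeroFreeRegion hrz.1)
  refine (isShadow_of_local hrz.convex_rigidSet hcomp ⟨e, he⟩ fun a ha => ?_).isSpectrahedralShadow
  have hlocal : ∀ᶠ ε in nhdsWithin 0 (Set.Ioi 0),
      IsShadow (rigidSet p e ∩ Metric.closedBall a ε) := by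
    by_cases hint : a ∈ interior (rigidSet p e)
    · exact eventually_isShadow_inter_closedBall (mem_interior_iff_mem_nhds.1 hint)
    · exact hrz.eventually_isShadow ha (hbd a ⟨subset_closure ha, hint⟩)
  obtain ⟨ε, hshadow, hε⟩ := (hlocal.and self_mem_nhdsWithin).exists
  exact ⟨Metric.closedBall a ε, Metric.closedBall_mem_nhds a hε, hshadow⟩
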